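/- arXiv:math/9903097 — 2 statements merged into one kernel-verified Lean document; each statement's English description precedes it below -/
import Mathlib

section
/- Let 𝓚 ⊆ 𝓛 ⊆ 𝓕 be a tower of fields with 𝓕|𝓛 and 𝓛|𝓚 finitely generated, equipped with a common valuation P. If (𝓕|𝓛,P) is uniformizable and (𝓛|𝓚,P) is uniformizable, then (𝓕|𝓚,P) is uniformizable. -/
/-! Common valuation-theoretic notions, following F.-V. Kuhlmann,
"On local uniformization in arbitrary characteristic I".

A valued field `(F, P)` is modelled by a field `F` together with a
`ValuationSubring F` (the valuation ring `𝓞` of the place `P`). -/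

namespace LocalUnif

variable {F : Type*} [Field F]

/-- `x` lies in the maximal ideal of the valuation subring `O`,
i.e. the residue `xP` is `0` (equivalently `v_P x > 0`, or `x = 0`). -/
def InMax (O : ValuationSubring F) (x : F) : Prop := x = 0 ∨ x⁻¹ ∉ O

/-- `x` is a unit of the valuation subring `O`, i.e. `v_P x = 0`. -/
def IsVUnit (O : ValuationSubring F) (x : F) : Prop := x ≠ 0 ∧ x ∈ O ∧ x⁻¹ ∈ O

/-- The valuation with valuation ring `O` is trivial on the subfield `K`;
equivalently, every nonzero element of `K` is a unit of `O`. -/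
def TrivialOn (O : ValuationSubring F) (K : Subfield F) : Prop :=
  ∀ x ∈ K, x ∈ O ∧ x⁻¹ ∈ O

/-- The residue field of `O` equals (the isomorphic image of) the subfield `K`:
every element of `O` is congruent to an element of `K` modulo the maximal ideal.
(For a place `P` of `F|K` this says that `P` is a rational place, `FP = K`.) -/
def ResidueEq (O : ValuationSubring F) (K : Subfield F) : Prop :=
  ∀ x ∈ O, ∃ c ∈ K, InMax O (x - c)

/-- The residue field of `O` is algebraic over (the image of) `K`; for a place of
`F|K` this says that `P` is zero-dimensional. -/
def ResidueAlgebraic (O : ValuationSubring F) (K : Subfield F) : Prop :=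
  ∀ x ∈ O, ∃ p : Polynomial F, p ≠ 0 ∧ (∀ i, p.coeff i ∈ K) ∧ InMax O (Polynomial.eval x p)

/-- The values `v_P (x i)` are rationally independent modulo `v_P K`:
no nontrivial ℤ-linear combination of the values lies in `ℚ ⊗ v_P K`
(equivalently, in `v_P K`, by clearing denominators). -/
def ValIndepMod (O : ValuationSubring F) (K : Subfield F) {ρ : ℕ} (x : Fin ρ → F) : Prop :=
  (∀ i, x i ≠ 0) ∧
  ∀ e : Fin ρ → ℤ, (∃ c ∈ K, c ≠ 0 ∧ IsVUnit O ((∏ i, x i ^ e i) / c)) → e = 0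

/-- The residues `(y i)P` are algebraically independent over the residue field `KP`:
for every polynomial with coefficients in `𝓞_K = K ∩ O`, at least one of which is
a unit, the value of the polynomial at `y` is a unit (so its residue is nonzero). -/
def ResIndep (O : ValuationSubring F) (K : Subfield F) {τ : ℕ} (y : Fin τ → F) : Prop :=
  (∀ i, y i ∈ O) ∧
  ∀ p : MvPolynomial (Fin τ) F, (∀ m, p.coeff m ∈ K ∧ p.coeff m ∈ O) →
    (∃ m, IsVUnit O (p.coeff m)) → ¬ InMax O (MvPolynomial.eval y p)

/-- `dim_ℚ (ℚ ⊗ (v_P F / v_P K)) = ρ`: there is a maximal set of `ρ` elements of `F`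
whose values are rationally independent modulo `v_P K`. -/
def RatRankEq (O : ValuationSubring F) (K : Subfield F) (ρ : ℕ) : Prop :=
  (∃ x : Fin ρ → F, ValIndepMod O K x) ∧ ∀ x : Fin (ρ + 1) → F, ¬ ValIndepMod O K x

/-- `trdeg (FP | KP) = τ`: there is a maximal set of `τ` elements of `O` whose
residues are algebraically independent over `KP`. -/
def ResTrdegEq (O : ValuationSubring F) (K : Subfield F) (τ : ℕ) : Prop :=
  (∃ y : Fin τ → F, ResIndep O K y) ∧ ∀ y : Fin (τ + 1) → F, ¬ ResIndep O K y

/-- `trdeg (F | K) = d`. -/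
def TrdegEq (K : Subfield F) (d : ℕ) : Prop :=
  ∃ t : Fin d → F, IsTranscendenceBasis ↥K t

/-- `P` is an Abhyankar place of `F|K`:
`trdeg F|K = trdeg FP|K + dim_ℚ (ℚ ⊗ v_P F)`. -/
def IsAbhyankar (O : ValuationSubring F) (K : Subfield F) : Prop :=
  ∃ d ρ τ : ℕ, d = ρ + τ ∧ TrdegEq K d ∧ RatRankEq O K ρ ∧ ResTrdegEq O K τ

/-- The value group of `O` is archimedean ordered (rank at most 1):
for any two positive values `v_P a, v_P b` there is `n` with `n · v_P a ≥ v_P b`. -/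
def RankOne (O : ValuationSubring F) : Prop :=
  ∀ a b : F, a ≠ 0 → InMax O a → b ≠ 0 → InMax O b → ∃ n : ℕ, a ^ n / b ∈ O

/-- The value group of `O` has (rank) at least `r`: there is a chain of `r` positive
values, each infinitely larger than the previous one. -/
def RankAtLeast (O : ValuationSubring F) (r : ℕ) : Prop :=
  ∃ a : Fin r → F, (∀ i, a i ≠ 0 ∧ InMax O (a i)) ∧
    ∀ i j : Fin r, i < j → ∀ n : ℕ, a i ^ n / a j ∉ O

/-- The value group of `O` has rank exactly `r`. -/
def RankEq (O : ValuationSubring F) (r : ℕ) : Prop :=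
  RankAtLeast O r ∧ ¬ RankAtLeast O (r + 1)

/-- The valuation is discrete: its value group is order isomorphic to `ℤ`,
i.e. there is a uniformizer `π` with every value an integer multiple of `v_P π`. -/
def IsDiscrete (O : ValuationSubring F) : Prop :=
  ∃ π : F, π ≠ 0 ∧ InMax O π ∧ ∀ x : F, x ≠ 0 → ∃ n : ℤ, IsVUnit O (x / π ^ n)

/-- `F|K` is an algebraic function field: a finitely generated field extension of
transcendence degree at least 1. -/
def IsFunctionField (K : Subfield F) : Prop :=
  (∃ S : Finset F, IntermediateField.adjoin ↥K (S : Set F) = ⊤) ∧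
  ∃ x : F, Transcendental ↥K x

/-- The data of a weak uniformization of `(𝓛|𝓚, P)` (both subfields of an ambient
valued field `F`, `𝓚 ⊆ 𝓛`) with uniformizing transcendence basis `t` and generators
`η`: there are polynomials `f i` in `n` variables `X₁, …, Xₙ` with coefficients in
`𝓞_𝓚[t₁,…,tₛ]` such that (U1) `X j` does not occur in `f i` for `i < j`,
(U2) `f i (η) = 0`, and (U3) the residue of `det J_f (η)` is nonzero; moreover `t`
is a transcendence basis of `𝓛|𝓚` inside `𝓞_𝓛` and `𝓛 = 𝓚(t, η)`. -/
def UnifData (𝓛 𝓚 : Subfield F) (O : ValuationSubring F) {s n : ℕ}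
    (t : Fin s → F) (η : Fin n → F) : Prop :=
  (∀ i, t i ∈ 𝓛 ∧ t i ∈ O) ∧ (∀ i, η i ∈ 𝓛 ∧ η i ∈ O) ∧
  AlgebraicIndependent ↥𝓚 t ∧
  (∀ z ∈ 𝓛, IsAlgebraic ↥(IntermediateField.adjoin ↥𝓚 (Set.range t)) z) ∧
  Subfield.closure ((𝓚 : Set F) ∪ Set.range t ∪ Set.range η) = 𝓛 ∧
  ∃ f : Fin n → MvPolynomial (Fin n) F,
    (∀ i m, (f i).coeff m ∈
      Subring.closure ((↑(𝓚.toSubring ⊓ O.toSubring) : Set F) ∪ Set.range t)) ∧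
    (∀ i j : Fin n, (i : ℕ) < (j : ℕ) → MvPolynomial.degreeOf j (f i) = 0) ∧
    (∀ i, MvPolynomial.eval η (f i) = 0) ∧
    IsVUnit O (Matrix.det (Matrix.of fun i j : Fin n =>
      MvPolynomial.eval η (MvPolynomial.pderiv j (f i))))

/-- `(𝓛|𝓚, P)` is uniformizable with respect to `ζ₁, …, ζ_m`:
there is a weak uniformization whose generators `η` include all the `ζ k`. -/
def UnifWrt (𝓛 𝓚 : Subfield F) (O : ValuationSubring F) {m : ℕ} (ζ : Fin m → F) : Prop :=
  ∃ (s n : ℕ) (t : Fin s → F) (η : Fin n → F),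
    UnifData 𝓛 𝓚 O t η ∧ ∃ σ : Fin m → Fin n, ∀ k, η (σ k) = ζ k

/-- `(𝓛|𝓚, P)` is uniformizable: uniformizable with respect to every finite
list of elements of `𝓞_𝓛`. -/
def UnifIn (𝓛 𝓚 : Subfield F) (O : ValuationSubring F) : Prop :=
  ∀ (m : ℕ) (ζ : Fin m → F), (∀ k, ζ k ∈ 𝓛 ∧ ζ k ∈ O) → UnifWrt 𝓛 𝓚 O ζ

section Defectless

variable {K L : Type*} [Field K] [Field L]

/-- The values of the `a i` lie in pairwise distinct cosets modulo the value group of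
the ground field along `φ`; thus there are at least `e` distinct cosets. -/
def ValClassIndep (φ : K →+* L) (OL : ValuationSubring L) {e : ℕ} (a : Fin e → L) : Prop :=
  (∀ i, a i ≠ 0) ∧ ∀ i j : Fin e, i ≠ j →
    ¬ ∃ c : K, c ≠ 0 ∧ IsVUnit OL (a i / (a j * φ c))

/-- The ramification index `e = (v_P L : v_P K)` of `OL` over the ground field along `φ`. -/
def RamIdxEq (φ : K →+* L) (OL : ValuationSubring L) (e : ℕ) : Prop :=
  (∃ a : Fin e → L, ValClassIndep φ OL a) ∧ ∀ a : Fin (e + 1) → L, ¬ ValClassIndep φ OL a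

/-- The residues of the `b i` are linearly independent over the residue field of the
ground field along `φ`. -/
def ResLinIndep (φ : K →+* L) (OK : ValuationSubring K) (OL : ValuationSubring L)
    {f : ℕ} (b : Fin f → L) : Prop :=
  (∀ i, b i ∈ OL) ∧ ∀ c : Fin f → K, (∀ i, c i ∈ OK) → (∃ i, ¬ InMax OK (c i)) →
    ¬ InMax OL (∑ i, φ (c i) * b i)

/-- The inertia degree `f = [LP : KP]` of `OL` over `(K, OK)` along `φ`. -/
def InertiaDegEq (φ : K →+* L) (OK : ValuationSubring K) (OL : ValuationSubring L)
    (f : ℕ) : Prop :=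
  (∃ b : Fin f → L, ResLinIndep φ OK OL b) ∧ ∀ b : Fin (f + 1) → L, ¬ ResLinIndep φ OK OL b

end Defectless

/-- `(K, OK)` is a defectless (stable) valued field: for every finite extension `L|K`
(inside a fixed algebraic closure) the fundamental equality
`[L : K] = ∑ᵢ eᵢ fᵢ` holds, the sum running over all extensions of the valuation. -/
def IsDefectless (K : Type*) [Field K] (OK : ValuationSubring K) : Prop :=
  ∀ L : IntermediateField K (AlgebraicClosure K), FiniteDimensional K ↥L →
    ∃ (g : ℕ) (Os : Fin g → ValuationSubring ↥L) (e f : Fin g → ℕ),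
      Function.Injective Os ∧
      (∀ O' : ValuationSubring ↥L, O'.comap (algebraMap K ↥L) = OK ↔ ∃ i, O' = Os i) ∧
      (∀ i, RamIdxEq (algebraMap K ↥L) (Os i) (e i)) ∧
      (∀ i, InertiaDegEq (algebraMap K ↥L) OK (Os i) (f i)) ∧
      Module.finrank K ↥L = ∑ i, e i * f i

/-- The extension `𝓛|𝓚` of subfields of `F` is separable (in the general sense of
MacLane): every finitely generated subextension is separably generated, i.e. admits
a separating transcendence basis. -/
def IsSeparableExt (𝓚 𝓛 : Subfield F) : Prop :=
  ∀ S : Finset F, ↑S ⊆ (𝓛 : Set F) →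
    ∃ (d : ℕ) (u : Fin d → F), (∀ i, u i ∈ 𝓛) ∧ AlgebraicIndependent ↥𝓚 u ∧
      ∀ x ∈ Subfield.closure ((𝓚 : Set F) ∪ ↑S),
        IsSeparable ↥(IntermediateField.adjoin ↥𝓚 (Set.range u)) x

/-- The embedding of a subfield `K`, on which the valuation is trivial, into
the residue field of `O`. -/
noncomputable def resEmb (O : ValuationSubring F) (K : Subfield F) (h : ∀ x ∈ K, x ∈ O) :
    ↥K →+* IsLocalRing.ResidueField ↥O :=
  (IsLocalRing.residue ↥O).comp
    { toFun := fun x => (⟨x.1, h x.1 x.2⟩ : ↥O)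
      map_one' := rfl
      map_mul' := fun _ _ => rfl
      map_zero' := rfl
      map_add' := fun _ _ => rfl }

end LocalUnif

namespace LocalUnifAux

open LocalUnif

theorem isAlgebraic_of_range_le {R S F : Type*} [Field R] [Field S] [Field F] [Algebra R F]
    [Algebra S F] (h : ∀ r : R, ∃ s : S, algebraMap S F s = algebraMap R F r) {z : F}
    (hz : IsAlgebraic R z) : IsAlgebraic S z := by
  obtain ⟨p, hp0, hp⟩ := hz
  have hl : p.map (algebraMap R F) ∈ Polynomial.lifts (algebraMap S F) := by
    rw [Polynomial.lifts_iff_coeff_lifts]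
    intro n
    obtain ⟨s, hs⟩ := h (p.coeff n)
    exact ⟨s, by rw [hs, Polynomial.coeff_map]⟩
  obtain ⟨q, hq⟩ := hl
  have hq' : q.map (algebraMap S F) = p.map (algebraMap R F) := by simpa using hq
  refine ⟨q, ?_, ?_⟩
  · rintro rfl
    rw [Polynomial.map_zero] at hq'
    exact hp0 ((Polynomial.map_eq_zero _).1 hq'.symm)
  · rw [Polynomial.aeval_def, Polynomial.eval₂_eq_eval_map, hq', ← Polynomial.eval₂_eq_eval_map,
      ← Polynomial.aeval_def, hp]

variable {F : Type*} [Field F]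

theorem alg_tower (K L : Subfield F) (hKL : K ≤ L) (T1 T2 : Set F)
    (h2 : ∀ z ∈ L, IsAlgebraic ↥(IntermediateField.adjoin ↥K T1) z) (z : F)
    (h1 : IsAlgebraic ↥(IntermediateField.adjoin ↥L T2) z) (T : Set F)
    (hT1 : T1 ⊆ T) (hT2 : T2 ⊆ T) :
    IsAlgebraic ↥(IntermediateField.adjoin ↥K T) z := by
  set M := IntermediateField.adjoin ↥K T with hM
  let A := algebraicClosure ↥M F
  have hLA : ∀ x ∈ L, x ∈ A := by
    intro x hx
    rw [mem_algebraicClosure_iff]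
    refine isAlgebraic_of_range_le ?_ (h2 x hx)
    rintro ⟨r, hr⟩
    exact ⟨⟨r, IntermediateField.adjoin.mono _ _ _ hT1 hr⟩, rfl⟩
  have hTA : ∀ x ∈ T2, x ∈ A := by
    intro x hx
    rw [mem_algebraicClosure_iff]
    exact isAlgebraic_algebraMap (⟨x, IntermediateField.subset_adjoin _ _ (hT2 hx)⟩ : M)
  have hle : ∀ x ∈ IntermediateField.adjoin ↥L T2, x ∈ A := by
    intro x hx
    have : (IntermediateField.adjoin ↥L T2).toSubfield ≤ A.toSubfield := by
      rw [IntermediateField.adjoin_toSubfield, Subfield.closure_le]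
      rintro y (⟨⟨l, hl⟩, rfl⟩ | hy)
      · exact hLA l hl
      · exact hTA y hy
    exact this hx
  have hzA : IsAlgebraic A z := by
    refine isAlgebraic_of_range_le ?_ h1
    rintro ⟨r, hr⟩
    exact ⟨⟨r, hle r hr⟩, rfl⟩
  exact IsAlgebraic.restrictScalars _ hzA

theorem indep_tower (K L : Subfield F) (hKL : K ≤ L) {s s' : ℕ} (t : Fin s → F) (t' : Fin s' → F)
    (ht : ∀ i, t i ∈ L) (h2 : AlgebraicIndependent ↥K t) (h1 : AlgebraicIndependent ↥L t') :
    AlgebraicIndependent ↥K (Fin.append t' t) := by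
  letI : Algebra K L := (Subfield.inclusion hKL).toAlgebra
  haveI : IsScalarTower K L F := IsScalarTower.of_algebraMap_eq fun x => rfl
  have h := h2.sumElim_of_tower (S := L) (y := t') (by
    rintro _ ⟨i, rfl⟩
    exact ⟨⟨t i, ht i⟩, rfl⟩) h1
  have h' := h.comp finSumFinEquiv.symm (Equiv.injective _)
  convert! h' using 1
  ext i
  refine Fin.addCases (fun i => ?_) (fun i => ?_) i <;> simp

theorem exists_finset_closure (A B : Set F) {c : F} (hc : c ∈ Subring.closure (A ∪ B)) :
    ∃ A0 : Finset F, (A0 : Set F) ⊆ A ∧ c ∈ Subring.closure ((A0 : Set F) ∪ B) := by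
  classical
  have mono : ∀ {X Y : Finset F} {c : F}, X ⊆ Y → c ∈ Subring.closure ((X : Set F) ∪ B) →
      c ∈ Subring.closure ((Y : Set F) ∪ B) := fun hXY h =>
    Subring.closure_mono (Set.union_subset_union_left _ (Finset.coe_subset.2 hXY)) h
  induction hc using Subring.closure_induction with
  | mem x hx =>
    rcases hx with hx | hx
    · exact ⟨{x}, by simpa using hx, Subring.subset_closure (by simp)⟩
    · exact ⟨∅, by simp, Subring.subset_closure (Or.inr hx)⟩
  | zero => exact ⟨∅, by simp, zero_mem _⟩
  | one => exact ⟨∅, by simp, one_mem _⟩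
  | add x y _ _ hx hy =>
    obtain ⟨X, hX, hx⟩ := hx
    obtain ⟨Y, hY, hy⟩ := hy
    exact ⟨X ∪ Y, by simp [hX, hY], add_mem (mono Finset.subset_union_left hx)
      (mono Finset.subset_union_right hy)⟩
  | neg x _ hx =>
    obtain ⟨X, hX, hx⟩ := hx
    exact ⟨X, hX, neg_mem hx⟩
  | mul x y _ _ hx hy =>
    obtain ⟨X, hX, hx⟩ := hx
    obtain ⟨Y, hY, hy⟩ := hy
    exact ⟨X ∪ Y, by simp [hX, hY], mul_mem (mono Finset.subset_union_left hx)
      (mono Finset.subset_union_right hy)⟩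

/-- polynomials with coefficients in `S` -/
noncomputable def polyS (σ : Type*) (S : Subring F) : Subring (MvPolynomial σ F) :=
  (MvPolynomial.map (σ := σ) S.subtype).range

theorem mem_polyS {σ : Type*} {S : Subring F} {p : MvPolynomial σ F} :
    p ∈ polyS σ S ↔ ∀ m, p.coeff m ∈ S := by
  constructor
  · rintro ⟨q, rfl⟩ m
    simp [MvPolynomial.coeff_map]
  · intro h
    rw [MvPolynomial.as_sum p]
    refine sum_mem fun m _ => ?_
    exact ⟨MvPolynomial.monomial m ⟨_, h m⟩, by simp⟩

/-- Combine the variables. -/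
noncomputable def comb (n n' : ℕ) :
    MvPolynomial (Fin n') (MvPolynomial (Fin n) F) →+* MvPolynomial (Fin (n + n')) F :=
  MvPolynomial.eval₂Hom (MvPolynomial.rename (Fin.castAdd n')).toRingHom
    (fun j => MvPolynomial.X (Fin.natAdd n j))

theorem comb_C {n n' : ℕ} (a : MvPolynomial (Fin n) F) :
    comb n n' (MvPolynomial.C a) = MvPolynomial.rename (Fin.castAdd n') a := by
  simp [comb]

theorem comb_X {n n' : ℕ} (j : Fin n') :
    comb (F := F) n n' (MvPolynomial.X j) = MvPolynomial.X (Fin.natAdd n j) := by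
  simp [comb]

theorem eval_rename_append {n n' : ℕ} (η : Fin n → F) (η' : Fin n' → F)
    (a : MvPolynomial (Fin n) F) :
    MvPolynomial.eval (Fin.append η η') (MvPolynomial.rename (Fin.castAdd n') a) =
      MvPolynomial.eval η a := by
  rw [MvPolynomial.eval_rename]
  congr 2
  ext i
  simp

theorem eval_comb {n n' : ℕ} (η : Fin n → F) (η' : Fin n' → F)
    (h : MvPolynomial (Fin n') (MvPolynomial (Fin n) F)) :
    MvPolynomial.eval (Fin.append η η') (comb n n' h) =
      MvPolynomial.eval η' (MvPolynomial.map (MvPolynomial.eval η) h) := by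
  induction h using MvPolynomial.induction_on with
  | C a => rw [comb_C, eval_rename_append]; simp
  | add p q hp hq => simp [hp, hq]
  | mul_X p j hp => simp [hp, comb_X]

theorem natAdd_notMem {n n' : ℕ} (a : MvPolynomial (Fin n) F) (j : Fin n') :
    Fin.natAdd n j ∉ (MvPolynomial.rename (Fin.castAdd n') a).vars := by
  classical
  intro h
  obtain ⟨i, -, hi⟩ := Finset.mem_image.1 (MvPolynomial.vars_rename _ _ h)
  have := congrArg Fin.val hi
  simp at this
  omega

theorem pderiv_comb {n n' : ℕ} (j : Fin n')
    (h : MvPolynomial (Fin n') (MvPolynomial (Fin n) F)) :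
    MvPolynomial.pderiv (Fin.natAdd n j) (comb n n' h) =
      comb n n' (MvPolynomial.pderiv j h) := by
  classical
  induction h using MvPolynomial.induction_on with
  | C a =>
    rw [comb_C, MvPolynomial.pderiv_eq_zero_of_notMem_vars (natAdd_notMem a j)]
    simp
  | add p q hp hq => simp [hp, hq]
  | mul_X p k hp =>
    rw [map_mul, MvPolynomial.pderiv_mul, MvPolynomial.pderiv_mul, hp, map_add, map_mul, map_mul,
      comb_X, MvPolynomial.pderiv_X, MvPolynomial.pderiv_X]
    congr 2
    by_cases hjk : j = k
    · subst hjk; simp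
    · have : Fin.natAdd n j ≠ Fin.natAdd n k := by simpa using hjk
      simp [Pi.single_apply, Ne.symm hjk, this.symm]

theorem pderiv_rename_castAdd {n n' : ℕ} (j : Fin n) (a : MvPolynomial (Fin n) F) :
    MvPolynomial.pderiv (Fin.castAdd n' j) (MvPolynomial.rename (Fin.castAdd n') a) =
      MvPolynomial.rename (Fin.castAdd n') (MvPolynomial.pderiv j a) :=
  MvPolynomial.pderiv_rename (Fin.castAdd_injective n n') j a

theorem comb_monomial {n n' : ℕ} (m : Fin n' →₀ ℕ) (a : MvPolynomial (Fin n) F) :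
    comb n n' (MvPolynomial.monomial m a) = MvPolynomial.rename (Fin.castAdd n') a *
      ∏ i ∈ m.support, MvPolynomial.X (Fin.natAdd n i) ^ m i := by
  rw [comb, MvPolynomial.coe_eval₂Hom, MvPolynomial.eval₂_monomial]
  rfl

theorem degreeOf_zero_of_notMem {σ : Type*} {p : MvPolynomial σ F} {j : σ} (h : j ∉ p.vars) :
    MvPolynomial.degreeOf j p = 0 := by
  classical
  rw [MvPolynomial.degreeOf_def, Multiset.count_eq_zero]
  rwa [MvPolynomial.vars_def, Multiset.mem_toFinset] at h

/-- Lift one polynomial. -/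
theorem exists_lift {n n' : ℕ} (S : Subring F) (η : Fin n → F)
    (p : MvPolynomial (Fin n') F)
    (hp : ∀ m ∈ p.support, ∃ a ∈ polyS (Fin n) S, MvPolynomial.eval η a = p.coeff m) :
    ∃ h : MvPolynomial (Fin n') (MvPolynomial (Fin n) F),
      MvPolynomial.map (MvPolynomial.eval η) h = p ∧
      (∀ m, (comb n n' h).coeff m ∈ S) ∧
      (∀ j, MvPolynomial.degreeOf j p = 0 →
        MvPolynomial.degreeOf (Fin.natAdd n j) (comb n n' h) = 0) := by
  classical
  choose! a ha hae using hp
  refine ⟨∑ m ∈ p.support, MvPolynomial.monomial m (a m), ?_, ?_, ?_⟩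
  · conv_rhs => rw [MvPolynomial.as_sum p]
    rw [map_sum]
    refine Finset.sum_congr rfl fun m hm => ?_
    rw [MvPolynomial.map_monomial, hae m hm]
  · rw [← mem_polyS, map_sum]
    refine sum_mem fun m hm => ?_
    rw [comb_monomial]
    have hX : ∀ x, (MvPolynomial.X x : MvPolynomial (Fin (n + n')) F) ∈ polyS _ S :=
      fun x => ⟨MvPolynomial.X x, by simp⟩
    refine mul_mem ?_ (prod_mem fun i _ => pow_mem (hX _) _)
    obtain ⟨q, hq⟩ := ha m hm
    exact ⟨MvPolynomial.rename (Fin.castAdd n') q, by rw [MvPolynomial.map_rename, hq]⟩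
  · intro j hj
    have key : comb n n' (∑ m ∈ p.support, MvPolynomial.monomial m (a m)) ∈
        MvPolynomial.supported F {x | x ≠ Fin.natAdd n j} := by
      rw [map_sum]
      refine sum_mem fun m hm => ?_
      rw [comb_monomial]
      refine mul_mem ?_ (prod_mem fun i hi => pow_mem ?_ _)
      · rw [MvPolynomial.mem_supported]
        intro x hx hxj
        exact natAdd_notMem (a m) j (hxj ▸ hx)
      · rw [MvPolynomial.X_mem_supported]
        intro hij
        have hij' : i = j := by simpa using hij
        subst hij'
        have h1 : m i ≤ MvPolynomial.degreeOf i p := by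
          rw [MvPolynomial.degreeOf_eq_sup]
          exact Finset.le_sup (f := fun m => m i) hm
        rw [hj] at h1
        exact (Finsupp.mem_support_iff.1 hi) (by omega)
    rw [MvPolynomial.mem_supported] at key
    refine degreeOf_zero_of_notMem ?_
    exact fun h => key h rfl

theorem IsVUnit.mul {O : ValuationSubring F} {x y : F} (hx : IsVUnit O x) (hy : IsVUnit O y) :
    IsVUnit O (x * y) :=
  ⟨mul_ne_zero hx.1 hy.1, mul_mem hx.2.1 hy.2.1, by
    rw [mul_inv]; exact mul_mem hx.2.2 hy.2.2⟩

end LocalUnifAux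

open LocalUnif in
/-- Theorem 1.2 of the paper, transitivity of relative
uniformization. For a tower `𝓚 ⊆ 𝓛 ⊆ 𝓕` of fields with `𝓕|𝓛` and `𝓛|𝓚`
finitely generated, equipped with a common valuation: if `(𝓕|𝓛, P)` and
`(𝓛|𝓚, P)` are uniformizable, then so is `(𝓕|𝓚, P)`. -/
theorem statement_2
    (𝓕 : Type*) [Field 𝓕] (O : ValuationSubring 𝓕)
    (𝓚 𝓛 : Subfield 𝓕) (h𝓚𝓛 : 𝓚 ≤ 𝓛)
    (hfg1 : ∃ S : Finset 𝓕, IntermediateField.adjoin ↥𝓛 (S : Set 𝓕) = ⊤)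
    (hfg2 : ∃ S : Finset 𝓕, ↑S ⊆ (𝓛 : Set 𝓕) ∧
      Subfield.closure ((𝓚 : Set 𝓕) ∪ ↑S) = 𝓛)
    (h1 : UnifIn ⊤ 𝓛 O) (h2 : UnifIn 𝓛 𝓚 O) :
    UnifIn ⊤ 𝓚 O := by
  
  classical
  intro m ζ hζ
  obtain ⟨s', n', t', η', ⟨ht', hη', hind', halg', hgen', f', hfc', hfd', hfe', hfJ'⟩, σ', hσ'⟩ :=
    h1 m ζ hζ
  -- finitely many constants
  choose A0 hA0 hA0c using fun i mm => LocalUnifAux.exists_finset_closure _ _ (hfc' i mm)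
  let A : Finset 𝓕 := Finset.univ.biUnion fun i => (f' i).support.biUnion fun mm => A0 i mm
  have hA : ∀ a ∈ A, a ∈ 𝓛 ∧ a ∈ O := by
    intro a ha
    simp only [A, Finset.mem_biUnion, Finset.mem_univ, true_and] at ha
    obtain ⟨i, mm, -, ha⟩ := ha
    exact hA0 i mm ha
  let e := A.equivFin
  obtain ⟨s, n, t, η, ⟨ht, hη, hind, halg, hgen, f, hfc, hfd, hfe, hfJ⟩, σ, hσ⟩ :=
    h2 A.card (fun k => (e.symm k : 𝓕)) (fun k => hA _ (e.symm k).2)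
  have hAη : ∀ a ∈ A, ∃ k, η k = a := fun a ha => ⟨σ (e ⟨a, ha⟩), by rw [hσ]; simp⟩
  let S : Subring 𝓕 := Subring.closure
    ((↑(𝓚.toSubring ⊓ O.toSubring) : Set 𝓕) ∪ Set.range (Fin.append t' t))
  have htS : ∀ i, t i ∈ S := fun i =>
    Subring.subset_closure (Or.inr ⟨Fin.natAdd s' i, by simp⟩)
  have htS' : ∀ i, t' i ∈ S := fun i =>
    Subring.subset_closure (Or.inr ⟨Fin.castAdd s i, by simp⟩)
  have hlift : ∀ i, ∀ mm ∈ (f' i).support, ∃ a ∈ LocalUnifAux.polyS (Fin n) S,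
      MvPolynomial.eval η a = (f' i).coeff mm := by
    intro i mm hmm
    have : Subring.closure ((A0 i mm : Set 𝓕) ∪ Set.range t') ≤
        (LocalUnifAux.polyS (Fin n) S).map (MvPolynomial.eval η) := by
      rw [Subring.closure_le]
      rintro x (hx | ⟨j, rfl⟩)
      · obtain ⟨k, hk⟩ := hAη x (by
          simp only [A, Finset.mem_biUnion, Finset.mem_univ, true_and]
          exact ⟨i, mm, hmm, hx⟩)
        exact ⟨MvPolynomial.X k, ⟨MvPolynomial.X k, by simp⟩, by simp [hk]⟩
      · exact ⟨MvPolynomial.C (t' j), ⟨MvPolynomial.C ⟨t' j, htS' j⟩, by simp⟩, by simp⟩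
    obtain ⟨a, ha, hae⟩ := this (hA0c i mm)
    exact ⟨a, ha, hae⟩
  choose h hmap hcoef hdeg using fun i => LocalUnifAux.exists_lift S η (f' i) (hlift i)
  refine ⟨s' + s, n + n', Fin.append t' t, Fin.append η η', ⟨?_, ?_, ?_, ?_, ?_, ?_⟩,
    fun k => Fin.natAdd n (σ' k), fun k => by simp [hσ']⟩
  · intro i
    refine ⟨trivial, ?_⟩
    refine Fin.addCases (fun i => ?_) (fun i => ?_) i
    · simpa using (ht' i).2
    · simpa using (ht i).2
  · intro i
    refine ⟨trivial, ?_⟩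
    refine Fin.addCases (fun i => ?_) (fun i => ?_) i
    · simpa using (hη i).2
    · simpa using (hη' i).2
  · exact LocalUnifAux.indep_tower 𝓚 𝓛 h𝓚𝓛 t t' (fun i => (ht i).1) hind hind'
  · intro z hz
    refine LocalUnifAux.alg_tower 𝓚 𝓛 h𝓚𝓛 _ _ halg z (halg' z hz) _ ?_ ?_
    · rintro _ ⟨i, rfl⟩
      exact ⟨Fin.natAdd s' i, by simp⟩
    · rintro _ ⟨i, rfl⟩
      exact ⟨Fin.castAdd s i, by simp⟩
  · rw [eq_top_iff, ← hgen', Subfield.closure_le]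
    set C := Subfield.closure ((𝓚 : Set 𝓕) ∪ Set.range (Fin.append t' t) ∪
      Set.range (Fin.append η η')) with hC
    have hLC : 𝓛 ≤ C := by
      rw [← hgen, Subfield.closure_le]
      rintro x ((hx | ⟨i, rfl⟩) | ⟨i, rfl⟩)
      · exact Subfield.subset_closure (Or.inl (Or.inl hx))
      · exact Subfield.subset_closure (Or.inl (Or.inr ⟨Fin.natAdd s' i, by simp⟩))
      · exact Subfield.subset_closure (Or.inr ⟨Fin.castAdd n' i, by simp⟩)
    rintro x ((hx | ⟨i, rfl⟩) | ⟨i, rfl⟩)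
    · exact hLC hx
    · exact Subfield.subset_closure (Or.inl (Or.inr ⟨Fin.castAdd s i, by simp⟩))
    · exact Subfield.subset_closure (Or.inr ⟨Fin.natAdd n i, by simp⟩)
  · refine ⟨Fin.append (fun i => MvPolynomial.rename (Fin.castAdd n') (f i))
      (fun i => LocalUnifAux.comb n n' (h i)), ?_, ?_, ?_, ?_⟩
    · intro i
      refine Fin.addCases (fun i => ?_) (fun i => ?_) i
      · rw [Fin.append_left]
        change ∀ m, _ ∈ S
        rw [← LocalUnifAux.mem_polyS]
        have hfS : f i ∈ LocalUnifAux.polyS (Fin n) S := by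
          rw [LocalUnifAux.mem_polyS]
          intro mm
          have hle : Subring.closure ((↑(𝓚.toSubring ⊓ O.toSubring) : Set 𝓕) ∪ Set.range t)
              ≤ S := by
            rw [Subring.closure_le]
            rintro x (hx | ⟨j, rfl⟩)
            · exact Subring.subset_closure (Or.inl hx)
            · exact htS j
          exact hle (hfc i mm)
        obtain ⟨q, hq⟩ := hfS
        exact ⟨MvPolynomial.rename (Fin.castAdd n') q, by rw [MvPolynomial.map_rename, hq]⟩
      · rw [Fin.append_right]
        exact hcoef i
    · intro i j
      refine Fin.addCases (fun i => ?_) (fun i => ?_) i <;>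
      refine Fin.addCases (fun j => ?_) (fun j => ?_) j <;> intro hij
      · rw [Fin.append_left,
          MvPolynomial.degreeOf_rename_of_injective (Fin.castAdd_injective n n')]
        exact hfd i j (by simpa using hij)
      · rw [Fin.append_left]
        refine LocalUnifAux.degreeOf_zero_of_notMem ?_
        exact LocalUnifAux.natAdd_notMem _ _
      · simp at hij
        omega
      · rw [Fin.append_right]
        exact hdeg i j (hfd' i j (by simpa using hij))
    · intro i
      refine Fin.addCases (fun i => ?_) (fun i => ?_) i
      · rw [Fin.append_left, LocalUnifAux.eval_rename_append, hfe]
      · rw [Fin.append_right, LocalUnifAux.eval_comb, hmap, hfe']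
    · have hdet := LocalUnifAux.IsVUnit.mul hfJ hfJ'
      convert hdet using 1
      rw [← Matrix.det_submatrix_equiv_self finSumFinEquiv]
      rw [← Matrix.det_fromBlocks_zero₁₂ _ (Matrix.of fun (i : Fin n') (j : Fin n) =>
        MvPolynomial.eval (Fin.append η η') (MvPolynomial.pderiv (Fin.castAdd n' j)
          (LocalUnifAux.comb n n' (h i))))]
      congr 1
      ext i j
      rcases i with i | i <;> rcases j with j | j
      · simp [LocalUnifAux.pderiv_rename_castAdd, LocalUnifAux.eval_rename_append]
      · simp [MvPolynomial.pderiv_eq_zero_of_notMem_vars (LocalUnifAux.natAdd_notMem (f i) j)]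
      · simp
      · simp [LocalUnifAux.pderiv_comb, LocalUnifAux.eval_comb, ← MvPolynomial.pderiv_map, hmap]
end

section
/- Let F|K be an algebraic function field and P a rational Abhyankar place of F|K of rank 1; that is, FP = K, the value group v_PF is archimedean ordered, and trdeg F|K = dim_ℚ(ℚ ⊗_ℤ v_PF). Then (F|K,P) is uniformizable. -/
section Part1

namespace LU

variable {F : Type*} [NormedField F] {d : ℕ}

/-- Laurent monomial. -/
def mono (x : Fin d → F) (e : Fin d → ℤ) : F := ∏ i, x i ^ e i

/-- monomial value basis. -/
structure Good (x : Fin d → F) : Prop where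
  ne : ∀ i, x i ≠ 0
  lt : ∀ i, ‖x i‖ < 1
  gen : ∀ y : F, y ≠ 0 → ∃ e, ‖y‖ = ‖mono x e‖
  indep : ∀ e, ‖mono x e‖ = 1 → e = 0

lemma mono_add {x : Fin d → F} (hx : ∀ i, x i ≠ 0) (e f : Fin d → ℤ) :
    mono x (e + f) = mono x e * mono x f := by
  simp only [mono, ← Finset.prod_mul_distrib, Pi.add_apply]
  exact Finset.prod_congr rfl fun i _ => zpow_add₀ (hx i) _ _

@[simp] lemma mono_zero (x : Fin d → F) : mono x 0 = 1 := by simp [mono]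

lemma mono_single (x : Fin d → F) (j : Fin d) (n : ℤ) : mono x (Pi.single j n) = x j ^ n := by
  rw [mono, Finset.prod_eq_single j]
  · simp
  · intro b _ hb; simp [hb]
  · simp

lemma mono_ne {x : Fin d → F} (hx : ∀ i, x i ≠ 0) (e : Fin d → ℤ) : mono x e ≠ 0 :=
  Finset.prod_ne_zero_iff.mpr fun i _ => zpow_ne_zero _ (hx i)

lemma mono_neg (x : Fin d → F) (e : Fin d → ℤ) : mono x (-e) = (mono x e)⁻¹ := by
  simp [mono]

lemma mono_sub {x : Fin d → F} (hx : ∀ i, x i ≠ 0) (e f : Fin d → ℤ) :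
    mono x (e - f) = mono x e / mono x f := by
  rw [sub_eq_add_neg, mono_add hx, mono_neg, div_eq_mul_inv]

lemma mono_zsmul (x : Fin d → F) (n : ℤ) (e : Fin d → ℤ) : mono x (n • e) = mono x e ^ n := by
  simp only [mono, ← Finset.prod_zpow, Pi.smul_apply, smul_eq_mul]
  exact Finset.prod_congr rfl fun i _ => by rw [mul_comm, zpow_mul]

lemma Good.inj {x : Fin d → F} (hx : Good x) {e f : Fin d → ℤ}
    (h : ‖mono x e‖ = ‖mono x f‖) : e = f := by
  have h0 : ‖mono x f‖ ≠ 0 := norm_ne_zero_iff.mpr (mono_ne hx.ne _)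
  have := hx.indep (e - f) (by rw [mono_sub hx.ne, norm_div, h, div_self h0])
  exact sub_eq_zero.mp this

lemma mono_comp {x : Fin d → F} (hx : ∀ i, x i ≠ 0) {x' : Fin d → F}
    (h : ∀ i, ∃ e, x' i = mono x e) (f : Fin d → ℤ) : ∃ e, mono x' f = mono x e := by
  choose g hg using h
  refine ⟨∑ i, f i • g i, ?_⟩
  have : ∀ s : Finset (Fin d), ∏ i ∈ s, x' i ^ f i = mono x (∑ i ∈ s, f i • g i) := by
    intro s
    induction s using Finset.induction_on with
    | empty => simp
    | insert a s ha ih => rw [Finset.prod_insert ha, Finset.sum_insert ha, mono_add hx, ih, hg,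
        mono_zsmul]
  exact this _

lemma mono_mem_of_nonneg (x : Fin d → F) (e : Fin d → ℤ) (he : ∀ i, 0 ≤ e i) :
    mono x e ∈ Submonoid.closure (Set.range x) := by
  refine Submonoid.prod_mem _ fun i _ => ?_
  obtain ⟨n, hn⟩ := Int.eq_ofNat_of_zero_le (he i)
  rw [hn, zpow_natCast]
  exact Submonoid.pow_mem _ (Submonoid.subset_closure (Set.mem_range_self i)) _

/-- refinement of monomial bases -/
structure Refi (x x' : Fin d → F) : Prop where
  back : ∀ i, ∃ e, x' i = mono x e
  mem : ∀ i, x i ∈ Submonoid.closure (Set.range x')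

lemma Refi.refl (x : Fin d → F) : Refi x x :=
  ⟨fun i => ⟨Pi.single i 1, by simp [mono_single]⟩, fun i => Submonoid.subset_closure ⟨i, rfl⟩⟩

lemma Refi.le {x x' : Fin d → F} (h : Refi x x') :
    Submonoid.closure (Set.range x) ≤ Submonoid.closure (Set.range x') := by
  rw [Submonoid.closure_le]; rintro _ ⟨i, rfl⟩; exact h.mem i

lemma Refi.trans {x x' x'' : Fin d → F} (hx : ∀ i, x i ≠ 0) (h : Refi x x') (h' : Refi x' x'') :
    Refi x x'' := by
  refine ⟨fun i => ?_, fun i => h'.le (h.mem i)⟩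
  obtain ⟨e, he⟩ := h'.back i
  rw [he]; exact mono_comp hx h.back e

lemma mono_update (x : Fin d → F) (hx : ∀ i, x i ≠ 0) {i j : Fin d} (hij : i ≠ j) (e : Fin d → ℤ) :
    mono (Function.update x i (x i / x j)) e = mono x (e - Pi.single j (e i)) := by
  rw [mono_sub hx, mono_single]
  have : ∀ k, Function.update x i (x i / x j) k ^ e k = x k ^ e k *
      (if k = i then (x j ^ e i)⁻¹ else 1) := by
    intro k
    by_cases hk : k = i
    · subst hk; simp [div_eq_mul_inv, mul_zpow]
    · simp [hk]
  rw [mono, Finset.prod_congr rfl fun k _ => this k, Finset.prod_mul_distrib, Finset.prod_ite_eq',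
    if_pos (Finset.mem_univ _), div_eq_mul_inv, mono]

lemma move {x : Fin d → F} (hx : Good x) {i j : Fin d} (hij : i ≠ j) (h : ‖x i‖ < ‖x j‖) :
    Good (Function.update x i (x i / x j)) ∧ Refi x (Function.update x i (x i / x j)) ∧
    ∀ e, mono x e = mono (Function.update x i (x i / x j)) (Function.update e j (e j + e i)) := by
  have key : ∀ e, mono x e =
      mono (Function.update x i (x i / x j)) (Function.update e j (e j + e i)) := by
    intro e
    rw [mono_update x hx.ne hij]
    congr 1
    ext k
    by_cases hk : k = j
    · subst hk; simp [hij]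
    · simp [hk]
  have hxj : 0 < ‖x j‖ := norm_pos_iff.mpr (hx.ne j)
  refine ⟨⟨?_, ?_, ?_, ?_⟩, ⟨?_, ?_⟩, key⟩
  · intro k
    by_cases hk : k = i
    · subst hk; simp [hx.ne]
    · simp [hk, hx.ne]
  · intro k
    by_cases hk : k = i
    · subst hk; simp only [Function.update_self, norm_div]
      rwa [div_lt_one hxj]
    · simp [hk, hx.lt]
  · intro y hy
    obtain ⟨e, he⟩ := hx.gen y hy
    exact ⟨_, he.trans (by rw [key])⟩
  · intro e he
    rw [mono_update x hx.ne hij] at he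
    have := hx.indep _ he
    have hi : e i = 0 := by have := congrFun this i; simpa [hij] using this
    ext k
    have := congrFun this k
    simpa [hi] using this
  · intro k
    by_cases hk : k = i
    · subst hk
      refine ⟨Pi.single k 1 - Pi.single j 1, ?_⟩
      rw [mono_sub hx.ne, mono_single, mono_single]; simp
    · exact ⟨Pi.single k 1, by simp [hk, mono_single]⟩
  · intro k
    by_cases hk : k = i
    · subst hk
      have : x k = Function.update x k (x k / x j) k * Function.update x k (x k / x j) j := by
        simp [hij.symm, hx.ne]
      have h2 := Submonoid.mul_mem _
        (Submonoid.subset_closure (Set.mem_range_self (f := Function.update x k (x k / x j)) k))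
        (Submonoid.subset_closure (Set.mem_range_self (f := Function.update x k (x k / x j)) j))
      rwa [← this] at h2
    · exact Submonoid.subset_closure ⟨k, by simp [hk]⟩

def Concl (x : Fin d → F) (e : Fin d → ℤ) : Prop :=
  ∃ x', Good x' ∧ Refi x x' ∧ mono x e ∈ Submonoid.closure (Set.range x')

lemma Concl.of_move {x : Fin d → F} (hx : Good x) {i j : Fin d} (hij : i ≠ j) (h : ‖x i‖ < ‖x j‖)
    {e : Fin d → ℤ}
    (hc : Concl (Function.update x i (x i / x j)) (Function.update e j (e j + e i))) :
    Concl x e := by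
  obtain ⟨g, r, k⟩ := move hx hij h
  obtain ⟨x', g', r', m⟩ := hc
  exact ⟨x', g', r.trans hx.ne r', by rw [k]; exact m⟩

lemma norm_cmp {x : Fin d → F} (hx : Good x) {i j : Fin d} (hij : i ≠ j) :
    ‖x i‖ < ‖x j‖ ∨ ‖x j‖ < ‖x i‖ := by
  rcases lt_trichotomy ‖x i‖ ‖x j‖ with h | h | h
  · exact Or.inl h
  · have := hx.inj (e := Pi.single i 1) (f := Pi.single j 1) (by simp [mono_single, h])
    have := congrFun this i
    simp [hij] at this
  · exact Or.inr h

lemma one_lt_of_nonpos {x : Fin d → F} (hx : Good x) {e : Fin d → ℤ} (he : ∀ i, e i ≤ 0)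
    {j : Fin d} (hj : e j < 0) : 1 < ‖mono x e‖ := by
  rw [mono, norm_prod]
  have hp : ∀ i, 0 < ‖x i‖ := fun i => norm_pos_iff.mpr (hx.ne i)
  have : ∏ i : Fin d, (1 : ℝ) < ∏ i, ‖x i ^ e i‖ := by
    refine Finset.prod_lt_prod (by simp) (fun i _ => ?_) ⟨j, Finset.mem_univ _, ?_⟩
    · rw [norm_zpow]
      exact one_le_zpow_of_nonpos₀ (hp i) (hx.lt i).le (he i)
    · rw [norm_zpow]
      exact one_lt_zpow_of_neg₀ (hp j) (hx.lt j) hj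
  simpa using this

lemma perron_aux (M : ℕ) : ∀ (x : Fin d → F) (e : Fin d → ℤ), Good x → ‖mono x e‖ ≤ 1 →
    (∀ k, |e k| ≤ M) → Concl x e := by
  classical
  induction M with
  | zero =>
    intro x e hx hn he
    refine ⟨x, hx, Refi.refl x, mono_mem_of_nonneg x e fun i => ?_⟩
    have := he i
    simp at this
    simp [this]
  | succ M IH =>
    have main : ∀ c : ℕ, ∀ (x : Fin d → F) (e : Fin d → ℤ), Good x → ‖mono x e‖ ≤ 1 →
        (∀ k, |e k| ≤ (M + 1 : ℕ)) →
        (Finset.univ.filter fun k => |e k| = ((M + 1 : ℕ) : ℤ)).card ≤ c → Concl x e := by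
      intro c
      induction c with
      | zero =>
        intro x e hx hn he hc
        refine IH x e hx hn fun k => ?_
        have h1 := he k
        have h2 : ¬ |e k| = ((M + 1 : ℕ) : ℤ) := by
          intro h
          have : k ∈ (Finset.univ.filter fun k => |e k| = ((M + 1 : ℕ) : ℤ)) := by simp [h]
          rw [Nat.le_zero, Finset.card_eq_zero] at hc
          rw [hc] at this
          simp at this
        push_cast at h1 h2 ⊢
        omega
      | succ c IHc =>
        -- the move that lowers the count
        have lower : ∀ (x : Fin d → F) (e : Fin d → ℤ), Good x → ‖mono x e‖ ≤ 1 →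
            (∀ k, |e k| ≤ (M + 1 : ℕ)) →
            (Finset.univ.filter fun k => |e k| = ((M + 1 : ℕ) : ℤ)).card ≤ c + 1 →
            ∀ j k, j ≠ k → ‖x j‖ < ‖x k‖ → |e k| = ((M + 1 : ℕ) : ℤ) →
            |e k + e j| < ((M + 1 : ℕ) : ℤ) → Concl x e := by
          intro x e hx hn he hc j k hjk hlt hk hlow
          obtain ⟨g, r, key⟩ := move hx hjk hlt
          refine Concl.of_move hx hjk hlt (IHc _ _ g (by rw [← key]; exact hn) ?_ ?_)
          · intro l
            by_cases hl : l = k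
            · subst hl; simpa using hlow.le
            · simpa [hl] using he l
          · have hs : (Finset.univ.filter fun l =>
                |Function.update e k (e k + e j) l| = ((M + 1 : ℕ) : ℤ)) ⊂
                (Finset.univ.filter fun k => |e k| = ((M + 1 : ℕ) : ℤ)) := by
              rw [Finset.ssubset_iff_of_subset]
              · refine ⟨k, by simpa using hk, ?_⟩
                simpa using hlow.ne
              · intro l
                by_cases hl : l = k
                · subst hl; intro _; simpa using hk
                · simp [hl]
            have := Finset.card_lt_card hs
            omega
        intro x e hx hn he hc
        by_cases hA : ∃ k, e k = ((M + 1 : ℕ) : ℤ)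
        · obtain ⟨k, hk⟩ := hA
          have inner : ∀ t : ℕ, ∀ (x : Fin d → F) (e : Fin d → ℤ), Good x → ‖mono x e‖ ≤ 1 →
              (∀ k, |e k| ≤ (M + 1 : ℕ)) →
              (Finset.univ.filter fun k => |e k| = ((M + 1 : ℕ) : ℤ)).card ≤ c + 1 →
              e k = ((M + 1 : ℕ) : ℤ) → (Finset.univ.filter fun l => e l < 0).card ≤ t →
              Concl x e := by
            intro t
            induction t with
            | zero =>
              intro x e hx hn he hc hk ht
              refine ⟨x, hx, Refi.refl x, mono_mem_of_nonneg x e fun i => ?_⟩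
              by_contra h
              rw [Nat.le_zero, Finset.card_eq_zero] at ht
              have : i ∈ (Finset.univ.filter fun l => e l < 0) := by simpa using h
              rw [ht] at this
              simp at this
            | succ t IHt =>
              intro x e hx hn he hc hk ht
              by_cases hneg : ∃ j, e j < 0
              swap
              · push Not at hneg
                exact ⟨x, hx, Refi.refl x, mono_mem_of_nonneg x e hneg⟩
              obtain ⟨j, hj⟩ := hneg
              have hjk : j ≠ k := by rintro rfl; push_cast at hk; omega
              have hbj := abs_le.mp (he j)
              rcases norm_cmp hx hjk with hlt | hlt
              · refine lower x e hx hn he hc j k hjk hlt (by rw [hk]; exact abs_of_nonneg (by positivity)) ?_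
                rw [abs_lt]; push_cast at *; omega
              · obtain ⟨g, r, key⟩ := move hx hjk.symm hlt
                refine Concl.of_move hx hjk.symm hlt (IHt _ _ g (by rw [← key]; exact hn) ?_ ?_ ?_ ?_)
                · intro l
                  by_cases hl : l = j
                  · subst hl
                    simp only [Function.update_self]
                    rw [abs_le]; push_cast at *; omega
                  · simpa [hl] using he l
                · refine le_trans (Finset.card_le_card ?_) hc
                  intro l
                  by_cases hl : l = j
                  · subst hl
                    simp only [Finset.mem_filter, Finset.mem_univ, true_and, Function.update_self]
                    intro h
                    exfalso
                    rw [abs_of_nonneg (by push_cast at *; omega)] at h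
                    push_cast at *; omega
                  · simp [hl]
                · simpa [hjk.symm] using hk
                · have hs : (Finset.univ.filter fun l =>
                      Function.update e j (e j + e k) l < 0) ⊂
                      (Finset.univ.filter fun l => e l < 0) := by
                    rw [Finset.ssubset_iff_of_subset]
                    · refine ⟨j, by simpa using hj, ?_⟩
                      simp only [Finset.mem_filter, Finset.mem_univ, true_and, Function.update_self]
                      push_cast at *; omega
                    · intro l
                      by_cases hl : l = j
                      · subst hl; intro _; simpa using hj
                      · simp [hl]
                  have := Finset.card_lt_card hs
                  omega
          exact inner _ x e hx hn he hc hk le_rfl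
        · by_cases hB : ∃ k, e k = -((M + 1 : ℕ) : ℤ)
          swap
          · refine IH x e hx hn fun k => ?_
            have h1 := abs_le.mp (he k)
            have h2 : e k ≠ ((M + 1 : ℕ) : ℤ) := fun h => hA ⟨k, h⟩
            have h3 : e k ≠ -((M + 1 : ℕ) : ℤ) := fun h => hB ⟨k, h⟩
            rw [abs_le]
            push_cast at *
            omega
          obtain ⟨k, hk⟩ := hB
          have inner : ∀ t : ℕ, ∀ (x : Fin d → F) (e : Fin d → ℤ), Good x → ‖mono x e‖ ≤ 1 →
              (∀ k, |e k| ≤ (M + 1 : ℕ)) →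
              (Finset.univ.filter fun k => |e k| = ((M + 1 : ℕ) : ℤ)).card ≤ c + 1 →
              (¬ ∃ k, e k = ((M + 1 : ℕ) : ℤ)) →
              e k = -((M + 1 : ℕ) : ℤ) → (Finset.univ.filter fun l => 0 < e l).card ≤ t →
              Concl x e := by
            intro t
            induction t with
            | zero =>
              intro x e hx hn he hc hA hk ht
              have h1 : ∀ i, e i ≤ 0 := by
                intro i
                by_contra h
                rw [Nat.le_zero, Finset.card_eq_zero] at ht
                have : i ∈ (Finset.univ.filter fun l => 0 < e l) := by simpa using h
                rw [ht] at this
                simp at this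
              have := one_lt_of_nonpos hx h1 (j := k) (by push_cast at hk; omega)
              exact absurd hn (not_le.mpr this)
            | succ t IHt =>
              intro x e hx hn he hc hA hk ht
              by_cases hpos : ∃ j, 0 < e j
              swap
              · push Not at hpos
                have := one_lt_of_nonpos hx hpos (j := k) (by push_cast at hk; omega)
                exact absurd hn (not_le.mpr this)
              obtain ⟨j, hj⟩ := hpos
              have hjk : j ≠ k := by rintro rfl; push_cast at hk; omega
              have hbj := abs_le.mp (he j)
              have hAj : e j ≠ ((M + 1 : ℕ) : ℤ) := fun h => hA ⟨j, h⟩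
              rcases norm_cmp hx hjk with hlt | hlt
              · refine lower x e hx hn he hc j k hjk hlt (by rw [hk, abs_neg]; exact abs_of_nonneg (by positivity)) ?_
                rw [abs_lt]; push_cast at *; omega
              · obtain ⟨g, r, key⟩ := move hx hjk.symm hlt
                refine Concl.of_move hx hjk.symm hlt
                  (IHt _ _ g (by rw [← key]; exact hn) ?_ ?_ ?_ ?_ ?_)
                · intro l
                  by_cases hl : l = j
                  · subst hl
                    simp only [Function.update_self]
                    rw [abs_le]; push_cast at *; omega
                  · simpa [hl] using he l
                · refine le_trans (Finset.card_le_card ?_) hc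
                  intro l
                  by_cases hl : l = j
                  · subst hl
                    simp only [Finset.mem_filter, Finset.mem_univ, true_and, Function.update_self]
                    intro h
                    exfalso
                    rw [abs_of_nonpos (by push_cast at *; omega)] at h
                    push_cast at *; omega
                  · simp [hl]
                · rintro ⟨l, hl'⟩
                  by_cases hl : l = j
                  · subst hl
                    simp only [Function.update_self] at hl'
                    push_cast at *; omega
                  · simp only [ne_eq, hl, not_false_eq_true, Function.update_of_ne] at hl'
                    exact hA ⟨l, hl'⟩
                · simpa [hjk.symm] using hk
                · have hs : (Finset.univ.filter fun l =>
                      0 < Function.update e j (e j + e k) l) ⊂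
                      (Finset.univ.filter fun l => 0 < e l) := by
                    rw [Finset.ssubset_iff_of_subset]
                    · refine ⟨j, by simpa using hj, ?_⟩
                      simp only [Finset.mem_filter, Finset.mem_univ, true_and, Function.update_self]
                      push_cast at *; omega
                    · intro l
                      by_cases hl : l = j
                      · subst hl; intro _; simpa using hj
                      · simp [hl]
                  have := Finset.card_lt_card hs
                  omega
          exact inner _ x e hx hn he hc hA hk le_rfl
    intro x e hx hn he
    exact main _ x e hx hn he le_rfl

lemma perron (S : Finset (Fin d → ℤ)) (x : Fin d → F) (hx : Good x)
    (hS : ∀ e ∈ S, ‖mono x e‖ ≤ 1) :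
    ∃ x', Good x' ∧ Refi x x' ∧ ∀ e ∈ S, mono x e ∈ Submonoid.closure (Set.range x') := by
  classical
  induction S using Finset.induction_on with
  | empty => exact ⟨x, hx, Refi.refl x, by simp⟩
  | insert e S _ ih =>
    obtain ⟨x1, g1, r1, h1⟩ := ih fun e he => hS e (Finset.mem_insert_of_mem he)
    have hm : ∃ f, mono x e = mono x1 f := by
      have h2 : ∀ i, ∃ f, x i = mono x1 f := by
        intro i
        have := r1.mem i
        refine Submonoid.closure_induction (motive := fun y _ => ∃ f, y = mono x1 f) ?_ ?_ ?_ this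
        · rintro _ ⟨k, rfl⟩; exact ⟨Pi.single k 1, by simp [mono_single]⟩
        · exact ⟨0, by simp⟩
        · rintro _ _ _ _ ⟨f, rfl⟩ ⟨g, rfl⟩; exact ⟨f + g, by rw [mono_add g1.ne]⟩
      exact mono_comp g1.ne h2 e
    obtain ⟨f, hf⟩ := hm
    obtain ⟨x2, g2, r2, h2⟩ := perron_aux (∑ k, (f k).natAbs) x1 f g1
      (by rw [← hf]; exact hS e (Finset.mem_insert_self _ _)) (by
        intro k
        have := Finset.single_le_sum (f := fun k => (f k).natAbs) (fun _ _ => Nat.zero_le _)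
          (Finset.mem_univ k)
        rw [Int.abs_eq_natAbs]; exact_mod_cast this)
    refine ⟨x2, g2, r1.trans hx.ne r2, ?_⟩
    intro e' he'
    rcases Finset.mem_insert.mp he' with rfl | h
    · rw [hf]; exact h2
    · exact r2.le (h1 e' h)

end LU
end Part1

section Part2
namespace LU
set_option linter.unusedSectionVars false
variable {F : Type*} [NormedField F] [IsUltrametricDist F] {d : ℕ}

lemma norm_sum_max {ι : Type*} (s : Finset ι) (hs : s.Nonempty) (f : ι → F)
    (inj : ∀ i ∈ s, ∀ j ∈ s, i ≠ j → ‖f i‖ ≠ ‖f j‖) :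
    ∃ i ∈ s, ‖∑ j ∈ s, f j‖ = ‖f i‖ ∧ ∀ j ∈ s, ‖f j‖ ≤ ‖f i‖ := by
  classical
  obtain ⟨i, hi, hm⟩ := Finset.exists_max_image s (fun j => ‖f j‖) hs
  refine ⟨i, hi, ?_, hm⟩
  rw [← Finset.add_sum_erase s f hi]
  rcases (s.erase i).eq_empty_or_nonempty with h0 | h0
  · simp [h0]
  have hlt : ‖∑ j ∈ s.erase i, f j‖ < ‖f i‖ := by
    obtain ⟨k, hk, hk'⟩ := IsUltrametricDist.exists_norm_finsetSum_le_of_nonempty h0 f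
    refine lt_of_le_of_lt hk' (lt_of_le_of_ne (hm k (Finset.mem_of_mem_erase hk)) ?_)
    exact inj k (Finset.mem_of_mem_erase hk) i hi (Finset.ne_of_mem_erase hk)
  rw [IsUltrametricDist.norm_add_eq_max_of_norm_ne_norm hlt.ne', max_eq_left hlt.le]

variable (K : Subfield F)

/-- trivially normed -/
def TrivN (K : Subfield F) : Prop := ∀ c ∈ K, c ≠ 0 → ‖c‖ = 1

lemma Good.inj' {x : Fin d → F} (hx : Good x) {e f : Fin d → ℤ} (h : ‖mono x e‖ = ‖mono x f‖) : e = f :=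
  hx.inj h

/-- Laurent ring -/
def R0 (x : Fin d → F) : Subring F := Subring.closure ((K : Set F) ∪ Set.range (mono x))

/-- polynomial ring -/
def P0 (x : Fin d → F) : Subring F := Subring.closure ((K : Set F) ∪ Set.range x)

variable {K}

lemma norm_laurent (hK : TrivN K) {x : Fin d → F} (hx : Good x) (s : (Fin d → ℤ) →₀ K)
    (hs : s ≠ 0) :
    ∃ e ∈ s.support, ‖s.sum fun e c => (c : F) * mono x e‖ = ‖mono x e‖ ∧
      ∀ e' ∈ s.support, ‖mono x e'‖ ≤ ‖mono x e‖ := by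
  have key : ∀ e ∈ s.support, ‖((s e : K) : F) * mono x e‖ = ‖mono x e‖ := by
    intro e he
    rw [norm_mul, hK _ (s e).2 (by simpa using he), one_mul]
  obtain ⟨e, he, h1, h2⟩ := norm_sum_max s.support (Finsupp.support_nonempty_iff.mpr hs)
    (fun e => ((s e : K) : F) * mono x e) (by
      intro i hi j hj hij
      simp only [key i hi, key j hj]
      intro h; exact hij (hx.inj h))
  refine ⟨e, he, ?_, ?_⟩
  · rw [key e he] at h1; exact h1
  · intro e' he'
    have := h2 e' he'
    simp only [key e he, key e' he'] at this
    exact this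

/-- the monomial hom -/
noncomputable def monoHom (x : Fin d → F) (hx : ∀ i, x i ≠ 0) : Multiplicative (Fin d → ℤ) →* F where
  toFun e := mono x e.toAdd
  map_one' := by simp
  map_mul' a b := by simp [mono_add hx]

lemma R0_form {x : Fin d → F} (hx : ∀ i, x i ≠ 0) {y : F} (hy : y ∈ R0 K x) :
    ∃ s : (Fin d → ℤ) →₀ K, y = s.sum fun e c => (c : F) * mono x e := by
  have : R0 K x ≤ (AddMonoidAlgebra.lift K F (Fin d → ℤ) (monoHom x hx)).range.toSubring := by
    refine Subring.closure_le.mpr ?_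
    rintro z (hz | ⟨e, rfl⟩)
    · exact Subalgebra.algebraMap_mem _ (⟨z, hz⟩ : K)
    · exact ⟨AddMonoidAlgebra.of K _ (Multiplicative.ofAdd e), by simp [monoHom]⟩
  obtain ⟨s, rfl⟩ := this hy
  refine ⟨s.coeff, ?_⟩
  simp only [RingHom.coe_coe, AddMonoidAlgebra.lift_apply, AlgHom.toRingHom_eq_coe]
  rfl

lemma mono_mem_R0 (x : Fin d → F) (e) : mono x e ∈ R0 K x := Subring.subset_closure (Or.inr ⟨e, rfl⟩)

lemma K_mem_R0 (x : Fin d → F) {c : F} (h : c ∈ K) : c ∈ R0 K x := Subring.subset_closure (Or.inl h)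

lemma form_mem_R0 (x : Fin d → F) (s : (Fin d → ℤ) →₀ K) :
    (s.sum fun e c => (c : F) * mono x e) ∈ R0 K x :=
  sum_mem fun e _ => mul_mem (K_mem_R0 x (s e).2) (mono_mem_R0 x e)

lemma R0_norm (hK : TrivN K) {x : Fin d → F} (hx : Good x) {y : F} (hy : y ∈ R0 K x) (h0 : y ≠ 0) :
    ∃ (e : Fin d → ℤ), ∃ c ∈ K, c ≠ 0 ∧ ‖y‖ = ‖mono x e‖ := by
  obtain ⟨s, rfl⟩ := R0_form hx.ne hy
  obtain ⟨e, he, h1, _⟩ := norm_laurent hK hx s (by rintro rfl; simp at h0)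
  exact ⟨e, s e, (s e).2, by simpa using he, h1⟩

lemma P0_mono {x x' : Fin d → F} (h : Refi x x') : P0 K x ≤ P0 K x' := by
  refine Subring.closure_le.mpr ?_
  rintro z (hz | ⟨i, rfl⟩)
  · exact Subring.subset_closure (Or.inl hz)
  · have : Submonoid.closure (Set.range x') ≤ (P0 K x').toSubmonoid := Submonoid.closure_le.mpr
      fun z hz => Subring.subset_closure (Or.inr hz)
    exact this (h.mem i)

lemma R0_perron (hK : TrivN K) {x : Fin d → F} (hx : Good x) (S : Finset F)
    (hS : ∀ y ∈ S, y ∈ R0 K x ∧ ‖y‖ ≤ 1) :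
    ∃ x', Good x' ∧ Refi x x' ∧ ∀ y ∈ S, y ∈ P0 K x' := by
  classical
  have h : ∀ y : S, ∃ s : (Fin d → ℤ) →₀ K, (y : F) = s.sum fun e c => (c : F) * mono x e :=
    fun y => R0_form hx.ne (hS y y.2).1
  choose s hs using h
  obtain ⟨x', g, r, h⟩ := perron (S.attach.biUnion fun y => (s y).support) x hx (by
    intro e he
    obtain ⟨y, -, hy⟩ := Finset.mem_biUnion.mp he
    obtain ⟨e', he', h1, h2⟩ := norm_laurent hK hx (s y) (by intro h; simp [h] at hy)
    refine (h2 e hy).trans ?_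
    rw [← h1, ← hs]; exact (hS y y.2).2)
  refine ⟨x', g, r, fun y hy => ?_⟩
  have : Submonoid.closure (Set.range x') ≤ (P0 K x').toSubmonoid := Submonoid.closure_le.mpr
      fun z hz => Subring.subset_closure (Or.inr hz)
  have e1 := hs ⟨y, hy⟩
  simp only at e1
  rw [e1]
  refine sum_mem fun e he => mul_mem (Subring.subset_closure (Or.inl (s _ e).2)) (this (h e ?_))
  exact Finset.mem_biUnion.mpr ⟨⟨y, hy⟩, Finset.mem_attach _ _, he⟩

/-- natural exponent as integer exponent -/
def nz (ν : Fin d → ℕ) : Fin d → ℤ := fun i => ν i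

lemma mono_nz (x : Fin d → F) (ν : Fin d → ℕ) : mono x (nz ν) = ∏ i, x i ^ ν i := by
  simp [mono, nz]

lemma norm_poly (hK : TrivN K) {x : Fin d → F} (hx : Good x) (p : MvPolynomial (Fin d) K)
    (hp : p ≠ 0) : ∃ ν ∈ p.support, ‖MvPolynomial.aeval x p‖ = ‖mono x (nz ν)‖ := by
  have key : ∀ e ∈ p.support, ‖((p.coeff e : K) : F) * mono x (nz e)‖ = ‖mono x (nz e)‖ := by
    intro e he
    rw [norm_mul, hK _ (p.coeff e).2 (by simpa using he), one_mul]
  obtain ⟨e, he, h1, h2⟩ := norm_sum_max p.support (by simpa using hp)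
    (fun e => ((p.coeff e : K) : F) * mono x (nz e)) (by
      intro i hi j hj hij
      simp only [key i hi, key j hj]
      intro h
      apply hij
      have := hx.inj h
      ext k
      have := congrFun this k
      simpa [nz] using this)
  refine ⟨e, he, ?_⟩
  rw [key e he] at h1
  rw [← h1, MvPolynomial.aeval_def, MvPolynomial.eval₂_eq']
  simp only [mono_nz]
  rfl

lemma Good.algebraicIndependent (hK : TrivN K) {x : Fin d → F} (hx : Good x) :
    AlgebraicIndependent K x := by
  rw [algebraicIndependent_iff]
  intro p hp
  by_contra h
  obtain ⟨ν, -, h1⟩ := norm_poly hK hx p h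
  rw [hp, norm_zero] at h1
  exact mono_ne hx.ne _ (norm_eq_zero.mp h1.symm)

lemma P0_norm (hK : TrivN K) {x : Fin d → F} (hx : Good x) {y : F} (hy : y ∈ P0 K x) (h0 : y ≠ 0) :
    ∃ ν : Fin d → ℕ, ‖y‖ = ‖mono x (nz ν)‖ := by
  have : P0 K x ≤ (MvPolynomial.aeval (R := K) x).range.toSubring := by
    refine Subring.closure_le.mpr ?_
    rintro z (hz | ⟨e, rfl⟩)
    · exact Subalgebra.algebraMap_mem _ (⟨z, hz⟩ : K)
    · exact ⟨MvPolynomial.X e, by simp⟩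
  obtain ⟨p, rfl⟩ := this hy
  obtain ⟨ν, _, h⟩ := norm_poly hK hx p (by rintro rfl; simp at h0)
  exact ⟨ν, h⟩

end LU
end Part2

section Part3
namespace LU
set_option linter.unusedSectionVars false
variable {F : Type*} [NormedField F] [IsUltrametricDist F] {d : ℕ}

/-- exponents with large norm -/
def SS (x : Fin d → F) (ρ : ℝ) : Set (Fin d → ℕ) := {ν | ρ < ‖mono x (nz ν)‖}

lemma norm_mono_nz (x : Fin d → F) (ν : Fin d → ℕ) : ‖mono x (nz ν)‖ = ∏ i, ‖x i‖ ^ ν i := by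
  rw [mono_nz]; simp

lemma norm_mono_nz_le {x : Fin d → F} (hx : Good x) (ν : Fin d → ℕ) (i : Fin d) :
    ‖mono x (nz ν)‖ ≤ ‖x i‖ ^ ν i := by
  rw [norm_mono_nz, ← Finset.mul_prod_erase _ _ (Finset.mem_univ i)]
  refine mul_le_of_le_one_right (by positivity) ?_
  exact Finset.prod_le_one (fun _ _ => by positivity)
    (fun j _ => pow_le_one₀ (norm_nonneg _) (hx.lt j).le)

lemma norm_mono_nz_le_one {x : Fin d → F} (hx : Good x) (ν : Fin d → ℕ) :
    ‖mono x (nz ν)‖ ≤ 1 := by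
  rw [norm_mono_nz]
  exact Finset.prod_le_one (fun _ _ => by positivity)
    (fun j _ => pow_le_one₀ (norm_nonneg _) (hx.lt j).le)

lemma SS_finite {x : Fin d → F} (hx : Good x) {ρ : ℝ} (hρ : 0 < ρ) : (SS x ρ).Finite := by
  have h : ∀ i, ∃ n : ℕ, ‖x i‖ ^ n < ρ := fun i => exists_pow_lt_of_lt_one hρ (hx.lt i)
  choose N hN using h
  refine (Set.Finite.pi' (t := fun i => Set.Iio (N i)) fun i => Set.finite_Iio _).subset ?_
  intro ν hν i
  by_contra hc
  have hc : N i ≤ ν i := by simpa using hc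
  have h1 : ρ < ‖x i‖ ^ ν i := lt_of_lt_of_le hν (norm_mono_nz_le hx ν i)
  have h2 : ‖x i‖ ^ ν i ≤ ‖x i‖ ^ N i := pow_le_pow_of_le_one (norm_nonneg _) (hx.lt i).le hc
  linarith [hN i]

lemma SS_pow {x : Fin d → F} (hx : Good x) {ρ : ℝ} (hρ : 0 < ρ) {k : ℕ} (hk : 0 < k) :
    (SS x (ρ ^ k)).ncard ≤ k ^ d * (SS x ρ).ncard := by
  have := (SS_finite hx hρ).to_subtype
  have := (SS_finite hx (pow_pos hρ k)).to_subtype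
  rw [← Nat.card_coe_set_eq, ← Nat.card_coe_set_eq]
  have : k ^ d * Nat.card (SS x ρ) = Nat.card ((Fin d → Fin k) × SS x ρ) := by
    rw [Nat.card_prod]; simp
  rw [this]
  have hmem : ∀ ν : Fin d → ℕ, ν ∈ SS x (ρ ^ k) → (fun i => ν i / k) ∈ SS x ρ := by
    intro ν hν
    have hν : ρ ^ k < ‖mono x (nz ν)‖ := hν
    show ρ < _
    by_contra hc
    push Not at hc
    have h1 : ‖mono x (nz fun i => ν i / k)‖ ^ k ≤ ρ ^ k := pow_le_pow_left₀ (norm_nonneg _) hc k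
    have h2 : ‖mono x (nz ν)‖ ≤ ‖mono x (nz fun i => ν i / k)‖ ^ k := by
      rw [norm_mono_nz, norm_mono_nz, ← Finset.prod_pow]
      refine Finset.prod_le_prod (fun _ _ => by positivity) fun i _ => ?_
      rw [← pow_mul]
      exact pow_le_pow_of_le_one (norm_nonneg _) (hx.lt i).le (Nat.div_mul_le_self _ _)
    linarith
  refine Nat.card_le_card_of_injective
    (fun ν : SS x (ρ ^ k) => ((fun i => (⟨ν.1 i % k, Nat.mod_lt _ hk⟩ : Fin k)),
      (⟨fun i => ν.1 i / k, hmem ν.1 ν.2⟩ : SS x ρ))) ?_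
  intro a b h
  ext i
  have h1 := congrFun (Prod.ext_iff.mp h).1 i
  have h2 := congrFun (Subtype.ext_iff.mp (Prod.ext_iff.mp h).2) i
  simp only [Fin.mk.injEq] at h1 h2
  rw [← Nat.div_add_mod (a.1 i) k, ← Nat.div_add_mod (b.1 i) k, h1, h2]

lemma SS_pos {x : Fin d → F} (hx : Good x) {ρ : ℝ} (hρ : 0 < ρ) (h1 : ρ < 1) :
    0 < (SS x ρ).ncard := by
  rw [Set.ncard_pos (SS_finite hx hρ)]
  refine ⟨0, ?_⟩
  show ρ < _
  rw [norm_mono_nz]; simpa using h1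

lemma count_final {x : Fin d → F} (hx : Good x) {c : ℝ} (hc : 0 < c) (hc1 : c < 1) {k n : ℕ}
    (hk : k ^ d < 2 ^ (k - 1)) (hk0 : 0 < k)
    (h : ∀ ρ : ℝ, 0 < ρ → c ^ k ≤ c * ρ → n * (SS x ρ).ncard ≤ (SS x (c * ρ)).ncard) : n < 2 := by
  by_contra hn
  push Not at hn
  have key : ∀ j, j + 1 ≤ k → n ^ j * (SS x c).ncard ≤ (SS x (c ^ (j + 1))).ncard := by
    intro j
    induction j with
    | zero => intro _; simp
    | succ j ih =>
      intro hj
      have h1 := ih (by omega)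
      have h2 := h (c ^ (j + 1)) (by positivity) (by
        rw [← pow_succ']; exact pow_le_pow_of_le_one hc.le hc1.le hj)
      rw [← pow_succ'] at h2
      refine le_trans ?_ h2
      rw [pow_succ', mul_assoc]
      exact Nat.mul_le_mul_left _ h1
  have h1 := key (k - 1) (by omega)
  rw [Nat.sub_add_cancel hk0] at h1
  have h2 := h1.trans (SS_pow hx hc hk0)
  have h3 := Nat.le_of_mul_le_mul_right h2 (SS_pos hx hc hc1)
  have h4 : 2 ^ (k - 1) ≤ n ^ (k - 1) := Nat.pow_le_pow_left hn _
  omega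

lemma exists_k (d : ℕ) : ∃ k : ℕ, 0 < k ∧ k ^ d < 2 ^ (k - 1) := by
  have := tendsto_pow_const_div_const_pow_of_one_lt d (r := (2:ℝ)) one_lt_two
  have h := (this.eventually (gt_mem_nhds (show (0:ℝ) < 1/2 by norm_num))).and
    (Filter.eventually_gt_atTop 0)
  obtain ⟨k, h1, h2⟩ := h.exists
  refine ⟨k, h2, ?_⟩
  rw [div_lt_iff₀ (by positivity)] at h1
  obtain ⟨m, rfl⟩ : ∃ m, k = m + 1 := ⟨k - 1, by omega⟩
  rw [Nat.add_sub_cancel]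
  rw [pow_succ] at h1
  have h3 : (((m + 1 : ℕ) : ℝ)) ^ d < 2 ^ m := by linarith
  exact_mod_cast h3

/-- rational residue field -/
def ResN (K : Subfield F) : Prop := ∀ y : F, ‖y‖ ≤ 1 → ∃ c ∈ K, ‖y - c‖ < 1

lemma dim_le {K : Subfield F} (hK : TrivN K) (hR : ResN K) (T : Finset ℝ) : ∀ V : Submodule K F,
    (∀ y ∈ V, y ≠ 0 → ‖y‖ ∈ T) → FiniteDimensional K V ∧ Module.finrank K V ≤ T.card := by
  induction T using Finset.induction_on_max with
  | empty =>
    intro V hV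
    have : V = ⊥ := by
      rw [Submodule.eq_bot_iff]; intro y hy; by_contra h; simpa using hV y hy h
    subst this
    exact ⟨inferInstance, by simp⟩
  | insert t T ht ih =>
    intro V hV
    have hc1 : ∀ c : K, ‖(c : F)‖ ≤ 1 := by
      intro c
      by_cases h : (c : F) = 0
      · simp [h]
      · exact (hK _ c.2 h).le
    by_cases hv : ∃ v ∈ V, v ≠ 0 ∧ ‖v‖ = t
    · obtain ⟨v, hv, hv0, hvt⟩ := hv
      have ht0 : 0 < t := by rw [← hvt]; positivity
      let V' : Submodule K F :=
        { carrier := {y | y ∈ V ∧ ‖y‖ < t}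
          zero_mem' := ⟨zero_mem _, by simpa using ht0⟩
          add_mem' := fun {a b} ha hb => ⟨add_mem ha.1 hb.1,
            lt_of_le_of_lt (IsUltrametricDist.norm_add_le_max a b) (max_lt ha.2 hb.2)⟩
          smul_mem' := fun c y hy => ⟨V.smul_mem c hy.1, by
            rw [Algebra.smul_def, norm_mul]
            exact lt_of_le_of_lt (mul_le_of_le_one_left (norm_nonneg _) (hc1 c)) hy.2⟩ }
      obtain ⟨f1, f2⟩ := ih V' (by
        intro y hy h0
        rcases Finset.mem_insert.mp (hV y hy.1 h0) with h | h
        · exact absurd h hy.2.ne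
        · exact h)
      have hle : V ≤ V' ⊔ Submodule.span K {v} := by
        intro y hy
        have hyt : ‖y‖ ≤ t := by
          by_cases h0 : y = 0
          · simpa [h0] using ht0.le
          rcases Finset.mem_insert.mp (hV y hy h0) with h | h
          · exact h.le
          · exact (ht _ h).le
        obtain ⟨c, hc, hlt⟩ := hR (y / v) (by rw [norm_div, hvt]; exact div_le_one_of_le₀ hyt ht0.le)
        have e : y = (y - (⟨c, hc⟩ : K) • v) + (⟨c, hc⟩ : K) • v := by abel
        rw [e]
        refine Submodule.add_mem_sup ⟨sub_mem hy (V.smul_mem _ hv), ?_⟩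
          (Submodule.smul_mem _ _ (Submodule.mem_span_singleton_self v))
        have e2 : y - (⟨c, hc⟩ : K) • v = (y / v - c) * v := by
          rw [sub_mul, div_mul_cancel₀ _ hv0]; rfl
        rw [e2, norm_mul, hvt]
        exact mul_lt_of_lt_one_left ht0 hlt
      have : FiniteDimensional K (V' ⊔ Submodule.span K {v} : Submodule K F) := inferInstance
      refine ⟨Submodule.finiteDimensional_of_le hle, ?_⟩
      refine (Submodule.finrank_mono hle).trans ?_
      refine (Submodule.finrank_add_le_finrank_add_finrank _ _).trans ?_
      rw [Finset.card_insert_of_notMem (fun h => lt_irrefl _ (ht _ h)), finrank_span_singleton hv0]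
      omega
    · push Not at hv
      obtain ⟨f1, f2⟩ := ih V (by
        intro y hy h0
        rcases Finset.mem_insert.mp (hV y hy h0) with h | h
        · exact absurd h (hv y hy h0)
        · exact h)
      exact ⟨f1, f2.trans (Finset.card_le_card (Finset.subset_insert _ _))⟩

end LU
end Part3

section Part4
namespace LU
set_option linter.unusedSectionVars false
variable {F : Type*} [NormedField F] [IsUltrametricDist F] {d : ℕ}

lemma mono_nz_mem_P0 {K : Subfield F} (x : Fin d → F) (ν) : mono x (nz ν) ∈ P0 K x := by
  rw [mono_nz]
  exact Subring.prod_mem _ fun i _ =>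
    Subring.pow_mem _ (show x i ∈ P0 K x from Subring.subset_closure (Or.inr ⟨i, rfl⟩)) _

lemma count_step {K : Subfield F} (hK : TrivN K) (hR : ResN K) {x : Fin d → F} (hx : Good x)
    {n k : ℕ} (hn : 0 < n) {c : ℝ} (hc : 0 < c) (e : Fin n → F)
    (M : Fin n → Matrix (Fin n) (Fin n) F) (hM : ∀ j a b, M j a b ∈ P0 K x)
    (h1 : ∀ a : Fin n → F, (∀ j, a j ∈ P0 K x) → ∀ j, c * ‖a j‖ ≤ ‖∑ j, a j * e j‖)
    (h2 : ∀ a : Fin n → F, (∀ j, a j ∈ P0 K x) → (∀ j, ‖a j‖ ≤ 1) → c ^ k < ‖∑ j, a j * e j‖ →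
      ‖∑ j, a j * e j‖ ^ n = ‖(∑ j, a j • M j).det‖)
    (ρ : ℝ) (hρ : 0 < ρ) (hck : c ^ k ≤ c * ρ) :
    n * (SS x ρ).ncard ≤ (SS x (c * ρ)).ncard := by
  classical
  have fin1 := SS_finite hx hρ
  have fin2 := SS_finite hx (mul_pos hc hρ)
  have := fin1.fintype
  let φ : (Fin n × SS x ρ → K) →ₗ[K] F :=
    Fintype.linearCombination K (fun p : Fin n × SS x ρ => mono x (nz p.2.1) * e p.1)
  have hφ : ∀ a, φ a = ∑ j, (∑ ν : SS x ρ, ((a (j, ν) : K) : F) * mono x (nz ν.1)) * e j := by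
    intro a
    simp only [φ, Fintype.linearCombination_apply, Fintype.sum_prod_type, Finset.sum_mul]
    refine Finset.sum_congr rfl fun j _ => Finset.sum_congr rfl fun ν _ => ?_
    rw [mul_assoc]; rfl
  have hbmem : ∀ a : Fin n × SS x ρ → K, ∀ j,
      (∑ ν : SS x ρ, ((a (j, ν) : K) : F) * mono x (nz ν.1)) ∈ P0 K x := fun a j =>
    sum_mem fun ν _ => mul_mem (Subring.subset_closure (Or.inl (a _).2)) (mono_nz_mem_P0 x _)
  have hc1 : ∀ c : K, ‖(c : F)‖ ≤ 1 := by
    intro c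
    by_cases h : (c : F) = 0
    · simp [h]
    · exact (hK _ c.2 h).le
  have hb1 : ∀ a : Fin n × SS x ρ → K, ∀ j,
      ‖∑ ν : SS x ρ, ((a (j, ν) : K) : F) * mono x (nz ν.1)‖ ≤ 1 := by
    intro a j
    refine IsUltrametricDist.norm_sum_le_of_forall_le_of_nonneg zero_le_one fun ν _ => ?_
    rw [norm_mul]
    exact mul_le_one₀ (hc1 _) (norm_nonneg _) (norm_mono_nz_le_one hx _)
  have hbig : ∀ a, a ≠ 0 → c * ρ < ‖φ a‖ := by
    intro a ha
    obtain ⟨⟨j, ν⟩, hjν⟩ := Function.ne_iff.mp ha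
    have hne : (Finset.univ.filter fun ν => a (j, ν) ≠ 0).Nonempty := ⟨ν, by simpa using hjν⟩
    have key : ∀ ν ∈ Finset.univ.filter (fun ν => a (j, ν) ≠ 0),
        ‖((a (j, ν) : K) : F) * mono x (nz ν.1)‖ = ‖mono x (nz ν.1)‖ := by
      intro ν hν
      rw [norm_mul, hK _ (a (j, ν)).2 (by simpa using hν), one_mul]
    obtain ⟨μ, hμ, e1, -⟩ := norm_sum_max _ hne
      (fun ν => ((a (j, ν) : K) : F) * mono x (nz ν.1)) (by
        intro p hp q hq hpq
        simp only [key p hp, key q hq]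
        intro h
        apply hpq
        have := hx.inj h
        ext i
        have := congrFun this i
        simpa [nz] using this)
    rw [key μ hμ] at e1
    have e2 : ∑ ν : SS x ρ, ((a (j, ν) : K) : F) * mono x (nz ν.1) =
        ∑ ν ∈ Finset.univ.filter (fun ν => a (j, ν) ≠ 0), ((a (j, ν) : K) : F) * mono x (nz ν.1) := by
      symm
      refine Finset.sum_filter_of_ne ?_
      intro ν _ h h0
      apply h; simp [h0]
    have := h1 _ (hbmem a) j
    rw [← hφ, e2, e1] at this
    have h3 : ρ < ‖mono x (nz μ.1)‖ := μ.2
    nlinarith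
  have hinj : Function.Injective φ := by
    rw [← LinearMap.ker_eq_bot, LinearMap.ker_eq_bot']
    intro a ha
    by_contra h
    have := hbig a h
    rw [ha, norm_zero] at this
    nlinarith
  have hval : ∀ y ∈ LinearMap.range φ, y ≠ 0 → ‖y‖ ∈ fin2.toFinset.image fun ν => ‖mono x (nz ν)‖ := by
    rintro _ ⟨a, rfl⟩ h0
    have hb := hbig a (by rintro rfl; simp at h0)
    have hb2 := hb
    rw [hφ] at hb2
    have e1 := h2 _ (hbmem a) (hb1 a) (lt_of_le_of_lt hck hb2)
    set D := (∑ j, (∑ ν : SS x ρ, ((a (j, ν) : K) : F) * mono x (nz ν.1)) • M j).det with hD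
    have hDm : D ∈ P0 K x := by
      rw [hD, Matrix.det_apply]
      refine sum_mem fun σ _ => ?_
      rw [Units.smul_def]
      refine zsmul_mem (prod_mem fun i _ => ?_) _
      rw [Matrix.sum_apply]
      exact sum_mem fun j _ => mul_mem (hbmem a j) (hM _ _ _)
    rw [← hφ] at e1
    have hD0 : D ≠ 0 := by
      intro h
      rw [h, norm_zero] at e1
      exact h0 (norm_eq_zero.mp (pow_eq_zero_iff hn.ne' |>.mp e1))
    obtain ⟨μ, hμ⟩ := P0_norm hK hx hDm hD0
    obtain ⟨f, hf⟩ := hx.gen _ h0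
    have e2 : ((n : ℤ) • f) = nz μ := by
      apply hx.inj
      rw [mono_zsmul, zpow_natCast, norm_pow, ← hf, e1, hμ]
    have e3 : f = nz (fun i => (f i).toNat) := by
      ext i
      have := congrFun e2 i
      simp only [Pi.smul_apply, smul_eq_mul, nz] at this ⊢
      have : 0 ≤ f i := by
        by_contra hneg
        push Not at hneg
        have hn' : (0 : ℤ) < n := by exact_mod_cast hn
        have := mul_neg_of_pos_of_neg hn' hneg
        omega
      omega
    refine Finset.mem_image.mpr ⟨fun i => (f i).toNat, ?_, ?_⟩
    · rw [Set.Finite.mem_toFinset]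
      show c * ρ < ‖mono x (nz _)‖
      rw [← e3, ← hf]; exact hb
    · rw [← e3, ← hf]
  obtain ⟨-, h4⟩ := dim_le hK hR _ (LinearMap.range φ) hval
  rw [LinearMap.finrank_range_of_inj hinj, Module.finrank_fintype_fun_eq_card] at h4
  have h5 := h4.trans Finset.card_image_le
  rw [Fintype.card_prod, Fintype.card_fin, ← Nat.card_eq_fintype_card, Nat.card_coe_set_eq,
    ← Set.ncard_eq_toFinset_card _ fin2] at h5
  exact h5

lemma P0_le_R0 {K : Subfield F} {x x' : Fin d → F} (h : Refi x x') : P0 K x' ≤ R0 K x := by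
  refine Subring.closure_le.mpr ?_
  rintro z (hz | ⟨i, rfl⟩)
  · exact K_mem_R0 x hz
  · obtain ⟨e, he⟩ := h.back i
    rw [he]; exact mono_mem_R0 x e

lemma count_main {K : Subfield F} (hK : TrivN K) (hR : ResN K) {x : Fin d → F} (hx : Good x)
    {n : ℕ} (hn : 0 < n) {c : ℝ} (hc : 0 < c) (hc1 : c < 1) (e : Fin n → F)
    (h1 : ∀ a : Fin n → F, (∀ j, a j ∈ R0 K x) → ∀ j, c * ‖a j‖ ≤ ‖∑ j, a j * e j‖)
    (h2 : ∀ ε : ℝ, 0 < ε → ∃ M : Fin n → Matrix (Fin n) (Fin n) F,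
      (∀ j a b, M j a b ∈ R0 K x ∧ ‖M j a b‖ ≤ 1) ∧
      ∀ a : Fin n → F, (∀ j, a j ∈ R0 K x) → (∀ j, ‖a j‖ ≤ 1) → ε < ‖∑ j, a j * e j‖ ^ n →
      ‖∑ j, a j * e j‖ ^ n = ‖(∑ j, a j • M j).det‖) : n = 1 := by
  classical
  obtain ⟨k, hk0, hk⟩ := exists_k d
  obtain ⟨M, hM, h3⟩ := h2 ((c ^ k) ^ n) (by positivity)
  obtain ⟨x', gx', rf, hS⟩ := R0_perron hK hx
    (Finset.univ.image fun p : Fin n × Fin n × Fin n => M p.1 p.2.1 p.2.2) (by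
      intro y hy
      obtain ⟨p, -, rfl⟩ := Finset.mem_image.mp hy
      exact hM _ _ _)
  have hle : P0 K x' ≤ R0 K x := P0_le_R0 rf
  have := count_final gx' hc hc1 hk hk0 (n := n) (fun ρ hρ hcr =>
    count_step hK hR gx' hn hc e M
      (fun j a b => hS _ (Finset.mem_image.mpr ⟨(j, a, b), Finset.mem_univ _, rfl⟩))
      (fun a ha => h1 a fun j => hle (ha j))
      (fun a ha hb hlt => h3 a (fun j => hle (ha j)) hb
        (pow_lt_pow_left₀ hlt (by positivity) hn.ne')) ρ hρ hcr)
  omega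

end LU
end Part4

section Part5
namespace LU
set_option linter.unusedSectionVars false

section A
variable {L Ω : Type*} [NontriviallyNormedField L] [CompleteSpace L] [NormedField Ω]
  [NormedAlgebra L Ω]

lemma coord_bound {n : ℕ} {v : Fin n → Ω} (hv : LinearIndependent L v) :
    ∃ c : ℝ, 0 < c ∧ ∀ (a : Fin n → L) (j : Fin n), c * ‖a j‖ ≤ ‖∑ j, a j • v j‖ := by
  have hinj : Function.Injective (Fintype.linearCombination L v) :=
    hv.fintypeLinearCombination_injective
  obtain ⟨C, hC, h⟩ := (LinearMap.injective_iff_antilipschitz _).mp hinj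
  refine ⟨(C : ℝ)⁻¹, by positivity, fun a j => ?_⟩
  have h1 := h.le_mul_dist a 0
  simp only [map_zero, dist_zero_right, Fintype.linearCombination_apply] at h1
  have h2 := norm_le_pi_norm a j
  have hC' : (0:ℝ) < C := by exact_mod_cast hC
  rw [inv_mul_le_iff₀ hC']
  exact h2.trans h1

lemma norm_bound {n : ℕ} (E : Subalgebra L Ω) (b : Module.Basis (Fin n) L E) :
    ∃ C : ℝ, 0 < C ∧ ∀ y : E, ‖Algebra.norm L y‖ ≤ C * ‖(y : Ω)‖ ^ n := by
  have : FiniteDimensional L E := Module.Finite.of_basis b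
  have h : ∀ i j, ∃ C : ℝ, 0 < C ∧ ∀ y : E, ‖Algebra.leftMulMatrix b y i j‖ ≤ C * ‖(y : Ω)‖ := by
    intro i j
    let f : E →ₗ[L] L :=
      { toFun := fun y => Algebra.leftMulMatrix b y i j
        map_add' := fun y z => by simp
        map_smul' := fun c y => by simp }
    refine ⟨‖LinearMap.toContinuousLinearMap f‖ + 1, by positivity, fun y => ?_⟩
    have h1 := (LinearMap.toContinuousLinearMap f).le_opNorm y
    have h2 : ‖y‖ = ‖(y : Ω)‖ := rfl
    rw [h2] at h1
    have h3 : ‖f y‖ ≤ ‖LinearMap.toContinuousLinearMap f‖ * ‖(y : Ω)‖ := h1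
    have h4 := norm_nonneg (y : Ω)
    show ‖f y‖ ≤ _
    nlinarith
  choose C hC h using h
  let D : ℝ := ∑ i, ∑ j, C i j
  have hD : ∀ i j, C i j ≤ D := fun i j =>
    (Finset.single_le_sum (f := fun j => C i j) (fun j _ => (hC i j).le) (Finset.mem_univ j)).trans
     (Finset.single_le_sum (f := fun i => ∑ j, C i j)
      (fun i _ => Finset.sum_nonneg fun j _ => (hC i j).le) (Finset.mem_univ i))
  have hD0 : 0 ≤ D := Finset.sum_nonneg fun i _ => Finset.sum_nonneg fun j _ => (hC i j).le
  refine ⟨(∑ _σ : Equiv.Perm (Fin n), D ^ n) + 1, by positivity, fun y => ?_⟩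
  rw [Algebra.norm_eq_matrix_det b, Matrix.det_apply]
  have h4 := norm_nonneg (y : Ω)
  have : ‖∑ σ : Equiv.Perm (Fin n), Equiv.Perm.sign σ • ∏ i, Algebra.leftMulMatrix b y (σ i) i‖
      ≤ ∑ _σ : Equiv.Perm (Fin n), D ^ n * ‖(y : Ω)‖ ^ n := by
    refine norm_sum_le_of_le _ fun σ _ => ?_
    have h5 : ‖Equiv.Perm.sign σ • ∏ i, Algebra.leftMulMatrix b y (σ i) i‖ =
        ‖∏ i, Algebra.leftMulMatrix b y (σ i) i‖ := by
      rcases Int.units_eq_one_or (Equiv.Perm.sign σ) with h | h <;> simp [h]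
    rw [h5, norm_prod]
    refine (Finset.prod_le_prod (fun _ _ => norm_nonneg _)
      (fun i _ => (h _ _ y).trans (mul_le_mul_of_nonneg_right (hD _ _) h4))).trans ?_
    simp [mul_pow]
  refine this.trans ?_
  rw [← Finset.sum_mul]
  exact mul_le_mul_of_nonneg_right (by linarith) (by positivity)

lemma norm_le_pow {n : ℕ} (E : Subalgebra L Ω) (b : Module.Basis (Fin n) L E) (y : E) :
    ‖Algebra.norm L y‖ ≤ ‖(y : Ω)‖ ^ n := by
  obtain ⟨C, hC, h⟩ := norm_bound E b
  by_contra hlt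
  push Not at hlt
  have h0 : 0 ≤ ‖(y : Ω)‖ ^ n := by positivity
  have hk : ∀ k : ℕ, ‖Algebra.norm L y‖ ^ k ≤ C * (‖(y : Ω)‖ ^ n) ^ k := by
    intro k
    have := h (y ^ k)
    rw [map_pow, norm_pow] at this
    simpa [← pow_mul, mul_comm] using this
  rcases h0.eq_or_lt with h0 | h0
  · have := hk 1
    rw [← h0] at this hlt
    simp at this
    rw [this] at hlt
    simp at hlt
  · obtain ⟨k, hk'⟩ := pow_unbounded_of_one_lt C ((one_lt_div h0).mpr hlt)
    have := hk k
    rw [div_pow, lt_div_iff₀ (by positivity)] at hk'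
    linarith

lemma norm_eq_pow {n : ℕ} (E : Subalgebra L Ω) (b : Module.Basis (Fin n) L E) (y z : E)
    (h : y * z = 1) : ‖Algebra.norm L y‖ = ‖(y : Ω)‖ ^ n := by
  have h1 := norm_le_pow E b y
  have h2 := norm_le_pow E b z
  have h3 : ‖Algebra.norm L y‖ * ‖Algebra.norm L z‖ = 1 := by
    rw [← norm_mul, ← map_mul, h, map_one, norm_one]
  have h4 : ‖(y : Ω)‖ ^ n * ‖(z : Ω)‖ ^ n = 1 := by
    have : ((y : Ω) * (z : Ω)) = 1 := by exact_mod_cast congrArg Subtype.val h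
    rw [← mul_pow, ← norm_mul, this, norm_one, one_pow]
  by_contra hne
  have h1 := lt_of_le_of_ne h1 hne
  have hz : 0 < ‖(z : Ω)‖ ^ n := by
    rcases (by positivity : 0 ≤ ‖(z : Ω)‖ ^ n).eq_or_lt with h | h
    · rw [← h] at h4; simp at h4
    · exact h
  have := norm_nonneg (Algebra.norm L y)
  nlinarith [norm_nonneg (Algebra.norm L z)]

end A

section D
variable {L : Type*} [NormedField L] [IsUltrametricDist L]

lemma prod_diff {ι : Type*} (s : Finset ι) (a b : ι → L) {δ : ℝ} (hδ : 0 ≤ δ)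
    (ha : ∀ i ∈ s, ‖a i‖ ≤ 1) (hb : ∀ i ∈ s, ‖b i‖ ≤ 1) (h : ∀ i ∈ s, ‖a i - b i‖ ≤ δ) :
    ‖∏ i ∈ s, a i - ∏ i ∈ s, b i‖ ≤ δ := by
  classical
  induction s using Finset.induction_on with
  | empty => simpa using hδ
  | insert i s hi ih =>
    rw [Finset.prod_insert hi, Finset.prod_insert hi]
    have e : a i * ∏ j ∈ s, a j - b i * ∏ j ∈ s, b j =
      (a i - b i) * ∏ j ∈ s, a j + b i * (∏ j ∈ s, a j - ∏ j ∈ s, b j) := by ring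
    rw [e]
    refine (IsUltrametricDist.norm_add_le_max _ _).trans (max_le ?_ ?_)
    · rw [norm_mul, norm_prod]
      refine (mul_le_of_le_one_right (norm_nonneg _) ?_).trans (h i (by simp))
      exact Finset.prod_le_one (fun _ _ => norm_nonneg _) fun j hj => ha j (by simp [hj])
    · rw [norm_mul]
      refine (mul_le_of_le_one_left (norm_nonneg _) (hb i (by simp))).trans ?_
      exact ih (fun j hj => ha j (by simp [hj])) (fun j hj => hb j (by simp [hj]))
        (fun j hj => h j (by simp [hj]))

lemma det_diff {n : ℕ} (A B : Matrix (Fin n) (Fin n) L) {δ : ℝ} (hδ : 0 ≤ δ)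
    (ha : ∀ i j, ‖A i j‖ ≤ 1) (hb : ∀ i j, ‖B i j‖ ≤ 1) (h : ∀ i j, ‖A i j - B i j‖ ≤ δ) :
    ‖A.det - B.det‖ ≤ δ := by
  rw [Matrix.det_apply, Matrix.det_apply, ← Finset.sum_sub_distrib]
  refine IsUltrametricDist.norm_sum_le_of_forall_le_of_nonneg hδ fun σ _ => ?_
  rw [← smul_sub]
  have h5 : ∀ z : L, ‖Equiv.Perm.sign σ • z‖ = ‖z‖ := by
    intro z
    rcases Int.units_eq_one_or (Equiv.Perm.sign σ) with h | h <;> simp [h]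
  rw [h5]
  exact prod_diff _ _ _ hδ (fun _ _ => ha _ _) (fun _ _ => hb _ _) (fun _ _ => h _ _)
end D

end LU
end Part5

section Part6
namespace LU
set_option linter.unusedSectionVars false

variable {F : Type*} [NormedField F] [IsUltrametricDist F] {d : ℕ}
variable {L Ω : Type*} [NontriviallyNormedField L] [CompleteSpace L] [NormedField Ω]
  [NormedAlgebra L Ω] [IsUltrametricDist L]

lemma exists_basis (φ : F →+* Ω) (E : Subalgebra L Ω) (hE : ∀ f, φ f ∈ E)
    (hspan : Subalgebra.toSubmodule E = Submodule.span L (Set.range φ)) [FiniteDimensional L E] :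
    ∃ (n : ℕ) (b : Module.Basis (Fin n) L E) (e : Fin n → F), ∀ j, (b j : Ω) = φ (e j) := by
  classical
  let t : Set E := Set.range fun f : F => (⟨φ f, hE f⟩ : E)
  obtain ⟨s, hst, hs, hli⟩ := exists_linearIndependent L t
  have htop : Submodule.span L t = ⊤ := by
    have hinj : Function.Injective (Submodule.map E.val.toLinearMap) :=
      Submodule.map_injective_of_injective Subtype.val_injective
    apply hinj
    rw [Submodule.map_span, Submodule.map_top]
    have h1 : E.val.toLinearMap '' t = Set.range φ := by
      ext z; simp [t]
    rw [h1, ← hspan]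
    ext z; simp
  have : Finite s := hli.finite
  have := Fintype.ofFinite s
  let B : Module.Basis s L E := Module.Basis.mk hli (by rw [Subtype.range_coe, hs, htop])
  have hB : ∀ i : s, ∃ f, φ f = (B i : Ω) := by
    intro i
    obtain ⟨f, hf⟩ := hst i.2
    exact ⟨f, by simp [B, ← hf]⟩
  choose g hg using hB
  refine ⟨Fintype.card s, B.reindex (Fintype.equivFin s), fun j => g ((Fintype.equivFin s).symm j), ?_⟩
  intro j
  simp [hg]

lemma dense_abs {K : Subfield F} (hK : TrivN K) (hR : ResN K) {x : Fin d → F} (hx : Good x)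
    (hd : 0 < d)
    (φ : F →+* Ω) (hφ : ∀ f, ‖φ f‖ = ‖f‖)
    (ψ : R0 K x →+* L) (hψ : ∀ r, algebraMap L Ω (ψ r) = φ r)
    (hdense : ∀ (l : L) (ε : ℝ), 0 < ε → ∃ r, ‖l - ψ r‖ < ε)
    (E : Subalgebra L Ω) (hE : ∀ f, φ f ∈ E)
    (hspan : Subalgebra.toSubmodule E = Submodule.span L (Set.range φ)) [FiniteDimensional L E]
    (f : F) (ε : ℝ) (hε : 0 < ε) : ∃ r ∈ R0 K x, ‖f - r‖ < ε := by
  classical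
  obtain ⟨n, b, e, hbe⟩ := exists_basis φ E hE hspan
  have hnψ : ∀ r, ‖ψ r‖ = ‖(r : F)‖ := by
    intro r
    rw [← hφ, ← hψ, norm_algebraMap']
  have hn : 0 < n := by
    rcases Nat.eq_zero_or_pos n with rfl | h
    · exfalso
      have : Subsingleton E := b.repr.toEquiv.subsingleton
      exact one_ne_zero (Subsingleton.elim (1 : E) 0)
    · exact h
  have hv : LinearIndependent L (fun j => (b j : Ω)) :=
    b.linearIndependent.map' E.val.toLinearMap (LinearMap.ker_eq_bot.mpr Subtype.val_injective)
  obtain ⟨c0, hc0, hc⟩ := coord_bound hv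
  let A : Fin n → Matrix (Fin n) (Fin n) L := fun j => Algebra.leftMulMatrix b (b j)
  -- scaling
  let B0 : ℝ := 1 + c0 + ∑ p : Fin n × Fin n × Fin n, ‖A p.1 p.2.1 p.2.2‖
  have hsum0 : 0 ≤ ∑ p : Fin n × Fin n × Fin n, ‖A p.1 p.2.1 p.2.2‖ :=
    Finset.sum_nonneg fun _ _ => norm_nonneg _
  have hB0 : 0 < B0 := by positivity
  have hB : ∀ j i k, ‖A j i k‖ ≤ B0 := by
    intro j i k
    have := Finset.single_le_sum (f := fun p : Fin n × Fin n × Fin n => ‖A p.1 p.2.1 p.2.2‖)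
      (fun _ _ => norm_nonneg _) (Finset.mem_univ (j, i, k))
    simp only at this
    simp only [B0]; linarith
  obtain ⟨N, hN⟩ := exists_pow_lt_of_lt_one (inv_pos.mpr hB0) (hx.lt ⟨0, hd⟩)
  have hxm : ∀ i, x i ∈ R0 K x := fun i => by
    have := mono_mem_R0 (K := K) x (Pi.single i 1)
    rwa [mono_single, zpow_one] at this
  let s : R0 K x := ⟨x ⟨0, hd⟩ ^ N, pow_mem (hxm _) _⟩
  have hs0 : 0 < ‖(s : F)‖ := norm_pos_iff.mpr (pow_ne_zero _ (hx.ne _))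
  have hs1 : ‖(s : F)‖ < B0⁻¹ := by simpa [s] using hN
  have hsB : ‖(s : F)‖ * B0 < 1 := by
    rw [inv_eq_one_div, lt_div_iff₀ hB0] at hs1; exact hs1
  have hphi : ∀ a : Fin n → F, ∀ ha : ∀ j, a j ∈ R0 K x,
      φ (∑ j, a j * ((s : F) * e j)) = ∑ j, (ψ ⟨a j, ha j⟩ * ψ s) • (b j : Ω) := by
    intro a ha
    rw [map_sum]
    refine Finset.sum_congr rfl fun j _ => ?_
    rw [map_mul, map_mul, Algebra.smul_def, map_mul, hψ, hψ, hbe]; ring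
  have h1 : n = 1 := by
    refine count_main hK hR hx hn (c := c0 * ‖(s : F)‖) (by positivity) ?_
      (fun j => (s : F) * e j) ?_ ?_
    · have : c0 < B0 := by simp only [B0]; linarith
      nlinarith
    · intro a ha j
      rw [← hφ (∑ j, a j * ((s : F) * e j)), hphi a ha]
      have := hc (fun j => ψ ⟨a j, ha j⟩ * ψ s) j
      simp only [norm_mul, hnψ] at this
      linarith
    · intro ε hε
      let δ := min ε 1
      have hδ : 0 < δ := lt_min hε one_pos
      have hex : ∀ j i k, ∃ r, ‖ψ s * A j i k - ψ r‖ < δ := fun j i k => hdense _ _ hδ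
      choose M hM using hex
      have hA1 : ∀ j i k, ‖ψ s * A j i k‖ ≤ 1 := by
        intro j i k
        rw [norm_mul, hnψ]
        nlinarith [hB j i k, norm_nonneg (A j i k)]
      have hM1 : ∀ j i k, ‖ψ (M j i k)‖ ≤ 1 := by
        intro j i k
        have e1 : ψ (M j i k) = ψ s * A j i k + -(ψ s * A j i k - ψ (M j i k)) := by ring
        rw [e1]
        refine (IsUltrametricDist.norm_add_le_max _ _).trans (max_le (hA1 j i k) ?_)
        rw [norm_neg]
        exact (hM j i k).le.trans (min_le_right _ _)
      refine ⟨fun j => Matrix.of fun i k => (M j i k : F), ?_, ?_⟩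
      · intro j i k
        exact ⟨(M j i k).2, by
          have := hM1 j i k
          rw [hnψ] at this
          exact this⟩
      intro a ha ha1 hlt
      set y := ∑ j, a j * ((s : F) * e j) with hy
      have hy0 : y ≠ 0 := by
        intro h
        rw [h, norm_zero, zero_pow hn.ne'] at hlt
        linarith
      let yE : E := ⟨φ y, hE y⟩
      let yI : E := ⟨φ y⁻¹, hE y⁻¹⟩
      have hN1 : ‖Algebra.norm L yE‖ = ‖y‖ ^ n := by
        rw [norm_eq_pow E b yE yI]
        · rw [← hφ]
        · apply Subtype.ext
          show φ y * φ y⁻¹ = 1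
          rw [← map_mul, mul_inv_cancel₀ hy0, map_one]
      let a' : Fin n → R0 K x := fun j => ⟨a j, ha j⟩
      have hyE : yE = ∑ j, (ψ (a' j) * ψ s) • b j := by
        apply Subtype.ext
        show φ y = _
        rw [hy, hphi a ha]
        simp [a']
      have hdet : Algebra.norm L yE = (∑ j, ψ (a' j) • (ψ s • A j)).det := by
        rw [Algebra.norm_eq_matrix_det b, hyE, map_sum]
        congr 1
        refine Finset.sum_congr rfl fun j _ => ?_
        rw [map_smul, mul_smul]
      have hdet2 : ‖(∑ j, a j • Matrix.of fun i k => (M j i k : F)).det‖ =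
          ‖(∑ j, ψ (a' j) • Matrix.of fun i k => ψ (M j i k)).det‖ := by
        have e1 : (∑ j, a j • Matrix.of fun i k => (M j i k : F)) =
          (R0 K x).subtype.mapMatrix (∑ j, a' j • Matrix.of fun i k => M j i k) := by
          ext i k; simp [Matrix.sum_apply, a']
        have e2 : (∑ j, ψ (a' j) • Matrix.of fun i k => ψ (M j i k)) =
          ψ.mapMatrix (∑ j, a' j • Matrix.of fun i k => M j i k) := by
          ext i k; simp [Matrix.sum_apply]
        rw [e1, e2, ← RingHom.map_det, ← RingHom.map_det, hnψ]
        rfl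
      rw [hdet2, ← hN1, hdet]
      have hbd : ∀ T : Fin n → L, (∀ j, ‖T j‖ ≤ 1) → ‖∑ j, ψ (a' j) * T j‖ ≤ 1 := by
        intro T hT
        refine IsUltrametricDist.norm_sum_le_of_forall_le_of_nonneg zero_le_one fun j _ => ?_
        rw [norm_mul, hnψ]
        exact mul_le_one₀ (ha1 j) (norm_nonneg _) (hT j)
      have hdd : ‖(∑ j, ψ (a' j) • (ψ s • A j)).det -
          (∑ j, ψ (a' j) • Matrix.of fun i k => ψ (M j i k)).det‖ ≤ δ := by
        refine det_diff _ _ hδ.le ?_ ?_ ?_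
        · intro i k
          simp only [Matrix.sum_apply, Matrix.smul_apply, smul_eq_mul]
          exact hbd _ fun j => hA1 j i k
        · intro i k
          simp only [Matrix.sum_apply, Matrix.smul_apply, smul_eq_mul, Matrix.of_apply]
          exact hbd _ fun j => hM1 j i k
        · intro i k
          simp only [Matrix.sum_apply, Matrix.smul_apply, smul_eq_mul, Matrix.of_apply]
          rw [← Finset.sum_sub_distrib]
          refine IsUltrametricDist.norm_sum_le_of_forall_le_of_nonneg hδ.le fun j _ => ?_
          rw [← mul_sub, norm_mul, hnψ]
          exact (mul_le_of_le_one_left (norm_nonneg _) (ha1 j)).trans (hM j i k).le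
      rw [← hN1, hdet] at hlt
      have hlt2 := lt_of_le_of_lt (hdd.trans (min_le_left _ _)) hlt
      set p := (∑ j, ψ (a' j) • (ψ s • A j)).det
      set q := (∑ j, ψ (a' j) • Matrix.of fun i k => ψ (M j i k)).det
      have e3 : q = p + -(p - q) := by ring
      rw [e3, IsUltrametricDist.norm_add_eq_max_of_norm_ne_norm (by rw [norm_neg]; exact hlt2.ne'),
        norm_neg, max_eq_left hlt2.le]
  subst h1
  have hone : ∀ g : F, ∃ l : L, φ g = l • (b 0 : Ω) := by
    intro g
    refine ⟨b.repr ⟨φ g, hE g⟩ 0, ?_⟩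
    have := b.sum_repr ⟨φ g, hE g⟩
    have := congrArg Subtype.val this
    simpa using this.symm
  obtain ⟨l, hl⟩ := hone f
  obtain ⟨l1, hl1⟩ := hone 1
  rw [map_one, Algebra.smul_def] at hl1
  have hl10 : algebraMap L Ω l1 ≠ 0 := by rintro h; simp [h] at hl1
  have hfl : φ f = algebraMap L Ω (l / l1) := by
    rw [hl, Algebra.smul_def, map_div₀, eq_div_iff hl10, mul_assoc,
      mul_comm (b 0 : Ω), ← hl1, mul_one]
  obtain ⟨r, hr⟩ := hdense (l / l1) ε hε
  refine ⟨r, r.2, ?_⟩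
  rw [← hφ, map_sub, hfl, ← hψ, ← map_sub, norm_algebraMap']
  exact hr

end LU
end Part6

section Part7
namespace LU
set_option linter.unusedSectionVars false

variable {F : Type*} [NormedField F] [IsUltrametricDist F] {d : ℕ}

lemma completion_ultra : IsUltrametricDist (UniformSpace.Completion F) := by
  refine IsUltrametricDist.isUltrametricDist_of_forall_norm_add_le_max_norm fun a b => ?_
  induction a, b using UniformSpace.Completion.induction_on₂ with
  | hp => exact isClosed_le (by fun_prop) (by fun_prop)
  | ih a b =>
    rw [← UniformSpace.Completion.coe_add, UniformSpace.Completion.norm_coe,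
      UniformSpace.Completion.norm_coe, UniformSpace.Completion.norm_coe]
    exact IsUltrametricDist.norm_add_le_max a b

lemma inv_mem_closure {K : Subfield F} (hK : TrivN K) {x : Fin d → F} (hx : Good x)
    {r : F} (hr : r ∈ R0 K x) : r⁻¹ ∈ (R0 K x).topologicalClosure := by
  by_cases h0 : r = 0
  · rw [h0, inv_zero]; exact zero_mem _
  obtain ⟨s, hs⟩ := R0_form hx.ne hr
  obtain ⟨e, he, h1, h2⟩ := norm_laurent hK hx s (by rintro rfl; simp at hs; exact h0 hs)
  rw [← hs] at h1
  have hc : ((s e : K) : F) ≠ 0 := by simpa using he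
  set u : F := ((s e : K) : F) * mono x e with hu
  have hu0 : u ≠ 0 := mul_ne_zero hc (mono_ne hx.ne e)
  have hnu : ‖u‖ = ‖mono x e‖ := by rw [hu, norm_mul, hK _ (s e).2 hc, one_mul]
  have huinv : u⁻¹ ∈ R0 K x := by
    rw [hu, mul_inv, ← mono_neg]
    exact mul_mem (K_mem_R0 x (inv_mem (s e).2)) (mono_mem_R0 x _)
  have hw : ‖1 - u⁻¹ * r‖ < 1 := by
    have e1 : 1 - u⁻¹ * r = -(u⁻¹ * (r - u)) := by field_simp; ring
    rw [e1, norm_neg, norm_mul, norm_inv, hnu, ← h1]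
    have hr0 : 0 < ‖r‖ := norm_pos_iff.mpr h0
    rw [inv_mul_lt_iff₀ hr0, mul_one]
    have e2 : r - u = ∑ e' ∈ s.support.erase e, ((s e' : K) : F) * mono x e' := by
      rw [hs, Finsupp.sum, ← Finset.add_sum_erase _ _ he]; simp [hu]
    rw [e2]
    rcases (s.support.erase e).eq_empty_or_nonempty with h | h
    · rw [h]; simpa using h0
    obtain ⟨k, hk, hk'⟩ := IsUltrametricDist.exists_norm_finsetSum_le_of_nonempty h
      (fun e' => ((s e' : K) : F) * mono x e')
    refine lt_of_le_of_lt hk' ?_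
    have hk1 := Finset.mem_of_mem_erase hk
    rw [norm_mul, hK _ (s k).2 (by simpa using hk1), one_mul, h1]
    refine lt_of_le_of_ne (h2 k hk1) fun h => Finset.ne_of_mem_erase hk (hx.inj h)
  have hg := (hasSum_geometric_of_norm_lt_one hw).tendsto_sum_nat
  have e3 : (1 - (1 - u⁻¹ * r))⁻¹ * u⁻¹ = r⁻¹ := by
    rw [sub_sub_cancel, mul_inv, inv_inv, mul_comm u, mul_assoc, mul_inv_cancel₀ hu0, mul_one]
  have hg2 := hg.mul_const u⁻¹
  rw [e3] at hg2
  show r⁻¹ ∈ closure (R0 K x : Set F)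
  refine mem_closure_of_tendsto hg2 (Filter.Eventually.of_forall fun n => ?_)
  exact mul_mem (sum_mem fun i _ => pow_mem (sub_mem (one_mem _) (mul_mem huinv hr)) _) huinv

/-- closure of the Laurent ring -/
noncomputable def CC {K : Subfield F} (hK : TrivN K) {x : Fin d → F} (hx : Good x) : Subfield F :=
  { (R0 K x).topologicalClosure with
    inv_mem' := by
      intro y hy
      have hy : y ∈ closure (R0 K x : Set F) := hy
      show y⁻¹ ∈ (R0 K x).topologicalClosure
      by_cases h0 : y = 0
      · rw [h0, inv_zero]; exact zero_mem _
      obtain ⟨u, hu, hlim⟩ := mem_closure_iff_seq_limit.mp hy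
      have := hlim.inv₀ h0
      exact (R0 K x).isClosed_topologicalClosure.mem_of_tendsto this
        (Filter.Eventually.of_forall fun n => inv_mem_closure hK hx (hu n)) }

lemma mem_CC {K : Subfield F} (hK : TrivN K) {x : Fin d → F} (hx : Good x) (y : F) :
    y ∈ CC hK hx ↔ y ∈ closure (R0 K x : Set F) := Iff.rfl

lemma dense {K : Subfield F} (hK : TrivN K) (hR : ResN K) {x : Fin d → F} (hx : Good x)
    (hd : 0 < d) [FiniteDimensional (IntermediateField.adjoin K (Set.range x)) F]
    (f : F) (ε : ℝ) (hε : 0 < ε) : ∃ r ∈ R0 K x, ‖f - r‖ < ε := by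
  classical
  let Ω := UniformSpace.Completion F
  have : IsUltrametricDist Ω := completion_ultra
  let φ : F →+* Ω := UniformSpace.Completion.coeRingHom
  have hφ : ∀ f, ‖φ f‖ = ‖f‖ := fun f => UniformSpace.Completion.norm_coe f
  let C := CC hK hx
  let L : Subfield Ω := (C.map φ).topologicalClosure
  have hCL : ∀ y ∈ C, φ y ∈ L := fun y hy =>
    Subfield.le_topologicalClosure _ ⟨y, hy, rfl⟩
  have hRC : ∀ y ∈ R0 K x, y ∈ C := fun y hy => (mem_CC hK hx y).mpr (subset_closure hy)
  have hRL : ∀ y ∈ R0 K x, φ y ∈ L := fun y hy => hCL y (hRC y hy)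
  letI : NontriviallyNormedField L :=
    { SubfieldClass.toNormedField L with
      non_trivial := by
        have hm : (x ⟨0, hd⟩)⁻¹ ∈ R0 K x := by
          have := mono_mem_R0 (K := K) x (Pi.single ⟨0, hd⟩ (-1))
          rwa [mono_single, zpow_neg_one] at this
        refine ⟨⟨φ (x ⟨0, hd⟩)⁻¹, hRL _ hm⟩, ?_⟩
        show 1 < ‖φ (x ⟨0, hd⟩)⁻¹‖
        rw [hφ, norm_inv]
        exact (one_lt_inv₀ (norm_pos_iff.mpr (hx.ne _))).mpr (hx.lt _) }
  letI : NormedAlgebra L Ω :=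
    { (inferInstance : Algebra L Ω) with
      norm_smul_le := fun a b => by
        rw [Algebra.smul_def, norm_mul]; exact le_rfl }
  have : CompleteSpace L := (Subfield.isClosed_topologicalClosure _).completeSpace_coe
  have : IsUltrametricDist L :=
    IsUltrametricDist.isUltrametricDist_of_forall_norm_add_le_max_norm fun a b =>
      IsUltrametricDist.norm_add_le_max (a : Ω) (b : Ω)
  let ψ : R0 K x →+* L := (φ.comp (R0 K x).subtype).codRestrict L (fun r => hRL r r.2)
  have hψ : ∀ r, algebraMap L Ω (ψ r) = φ r := fun r => rfl
  have hdense : ∀ (l : L) (ε : ℝ), 0 < ε → ∃ r, ‖l - ψ r‖ < ε := by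
    intro l ε hε
    have hl : (l : Ω) ∈ closure ((C.map φ : Subfield Ω) : Set Ω) := l.2
    obtain ⟨_, ⟨y, hy, rfl⟩, h1⟩ := Metric.mem_closure_iff.mp hl (ε / 2) (by positivity)
    obtain ⟨r, hr, h2⟩ := Metric.mem_closure_iff.mp ((mem_CC hK hx y).mp hy) (ε / 2) (by positivity)
    refine ⟨⟨r, hr⟩, ?_⟩
    show ‖(l : Ω) - φ r‖ < ε
    rw [dist_eq_norm] at h1 h2
    rw [← hφ, map_sub] at h2
    have : (l : Ω) - φ r = ((l : Ω) - φ y) + (φ y - φ r) := by ring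
    rw [this]
    refine lt_of_le_of_lt (norm_add_le _ _) ?_
    linarith
  let E : Subalgebra L Ω := Algebra.adjoin L (Set.range φ)
  have hE : ∀ f, φ f ∈ E := fun f => Algebra.subset_adjoin ⟨f, rfl⟩
  have hspan : Subalgebra.toSubmodule E = Submodule.span L (Set.range φ) := by
    have : (Submonoid.closure (Set.range φ) : Set Ω) = Set.range φ := by
      have h := Submonoid.closure_eq (MonoidHom.mrange (φ : F →* Ω))
      rw [MonoidHom.coe_mrange] at h
      have h2 := congrArg (fun s : Submonoid Ω => (s : Set Ω)) h
      simpa using h2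
    rw [Algebra.adjoin_eq_span, this]
  have hML : ∀ m : IntermediateField.adjoin K (Set.range x), φ m ∈ L := by
    intro m
    refine hCL _ ?_
    have hle : (IntermediateField.adjoin K (Set.range x)).toSubfield ≤ C := by
      refine Subfield.closure_le.mpr ?_
      rintro z (⟨c, rfl⟩ | ⟨i, rfl⟩)
      · exact hRC _ (K_mem_R0 x c.2)
      · have := mono_mem_R0 (K := K) x (Pi.single i 1)
        rw [mono_single, zpow_one] at this
        exact hRC _ this
    exact hle m.2
  have hfd : FiniteDimensional L E := by
    let M := IntermediateField.adjoin K (Set.range x)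
    let b := Module.finBasis M F
    have h1 : Submodule.span L (Set.range φ) ≤ Submodule.span L (Set.range fun i => φ (b i)) := by
      refine Submodule.span_le.mpr ?_
      rintro _ ⟨g, rfl⟩
      have hg := b.sum_repr g
      rw [← hg, map_sum]
      refine sum_mem fun i _ => ?_
      have : φ (b.repr g i • b i) = (⟨φ (b.repr g i : F), hML _⟩ : L) • φ (b i) := by
        rw [Algebra.smul_def, map_mul, Algebra.smul_def]; rfl
      rw [this]
      exact Submodule.smul_mem _ _ (Submodule.subset_span ⟨i, rfl⟩)
    have h2 : FiniteDimensional L (Submodule.span L (Set.range fun i => φ (b i))) :=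
      FiniteDimensional.span_of_finite L (Set.finite_range _)
    have h3 : FiniteDimensional L (Subalgebra.toSubmodule E) := by
      rw [hspan]; exact Submodule.finiteDimensional_of_le h1
    exact h3
  exact dense_abs hK hR hx hd φ hφ ψ hψ hdense E hE hspan f ε hε

end LU
end Part7

section Part8
namespace LU
set_option linter.unusedSectionVars false

variable {F : Type*} [NormedField F] [IsUltrametricDist F] {d : ℕ}
variable {ι : Type*} (p : ℕ) [hp : Fact p.Prime] [CharP F p]

/-- the map `w ↦ Σ w_a^p b_a` -/
noncomputable def Phi (b : ι → F) : (ι →₀ F) →+ F :=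
  Finsupp.liftAddHom fun a => (AddMonoidHom.mulRight (b a)).comp (frobenius F p : F →+ F)

lemma Phi_apply (b : ι → F) (w : ι →₀ F) : Phi p b w = w.sum fun a u => u ^ p * b a := by
  simp [Phi]; rfl

lemma Phi_single (b : ι → F) (a : ι) (u : F) : Phi p b (Finsupp.single a u) = u ^ p * b a := by
  rw [Phi_apply, Finsupp.sum_single_index]; simp [hp.out.ne_zero]

lemma Phi_smul (b : ι → F) (w : ι →₀ F) (c : F) : Phi p b (c • w) = c ^ p * Phi p b w := by
  induction w using Finsupp.induction_linear with
  | zero => simp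
  | add f g hf hg => simp [hf, hg, mul_add]
  | single a u => rw [Finsupp.smul_single, Phi_single, Phi_single, smul_eq_mul]; ring

lemma Phi_norm {K : Subfield F} (hK : TrivN K) (hR : ResN K) (b : ι → F) (hb : ∀ a, b a ∈ K)
    (hli : ∀ c : ι →₀ F, (∀ a, c a ∈ K) → Phi p b c = 0 → c = 0) (w : ι →₀ F) (hw : w ≠ 0) :
    ∃ a ∈ w.support, ‖Phi p b w‖ = ‖w a‖ ^ p := by
  classical
  obtain ⟨a0, ha0, hmax⟩ := Finset.exists_max_image w.support (fun a => ‖w a‖)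
    (Finsupp.support_nonempty_iff.mpr hw)
  refine ⟨a0, ha0, ?_⟩
  have hW : w a0 ≠ 0 := by simpa using ha0
  have hW' : 0 < ‖w a0‖ := norm_pos_iff.mpr hW
  have hle : ∀ a, ‖w a0‖⁻¹ * ‖w a‖ ≤ 1 := by
    intro a
    rw [inv_mul_le_iff₀ hW', mul_one]
    by_cases h : a ∈ w.support
    · exact hmax a h
    · rw [Finsupp.notMem_support_iff.mp h, norm_zero]; exact hW'.le
  have hb1 : ∀ a, ‖b a‖ ≤ 1 := by
    intro a
    by_cases h : b a = 0
    · simp [h]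
    · exact (hK _ (hb a) h).le
  have hres : ∀ a, ∃ c, c ∈ K ∧ ‖(w a0)⁻¹ * w a - c‖ < 1 := by
    intro a
    obtain ⟨c, hc, h⟩ := hR ((w a0)⁻¹ * w a) (by rw [norm_mul, norm_inv]; exact hle a)
    exact ⟨c, hc, h⟩
  choose c0 hc0 hc1 using hres
  let c : ι →₀ F := Finsupp.onFinset w.support (fun a => if a ∈ w.support then c0 a else 0)
    (fun a h => by by_contra h'; simp [h'] at h)
  have hcK : ∀ a, c a ∈ K := by
    intro a
    simp only [c, Finsupp.onFinset_apply]
    split_ifs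
    · exact hc0 a
    · exact zero_mem _
  have hcd : ∀ a, ‖((w a0)⁻¹ • w - c) a‖ < 1 := by
    intro a
    simp only [c, Finsupp.onFinset_apply, Finsupp.sub_apply, Finsupp.smul_apply, smul_eq_mul]
    split_ifs with h
    · exact hc1 a
    · rw [Finsupp.notMem_support_iff.mp h]; simp
  have hcne : c ≠ 0 := by
    intro h
    have := hcd a0
    rw [h] at this
    simp [hW] at this
  have hΦc : Phi p b c ≠ 0 := fun h => hcne (hli c hcK h)
  have hΦcK : Phi p b c ∈ K := by
    rw [Phi_apply]
    exact sum_mem fun a _ => mul_mem (pow_mem (hcK a) _) (hb a)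
  have h1 := hK _ hΦcK hΦc
  have h2 : ‖Phi p b ((w a0)⁻¹ • w - c)‖ < 1 := by
    rw [Phi_apply, Finsupp.sum]
    rcases ((w a0)⁻¹ • w - c).support.eq_empty_or_nonempty with h | h
    · rw [h]; simp
    obtain ⟨k, hk, hk'⟩ := IsUltrametricDist.exists_norm_finsetSum_le_of_nonempty h
      (fun a => (((w a0)⁻¹ • w - c) a) ^ p * b a)
    refine lt_of_le_of_lt hk' ?_
    rw [norm_mul, norm_pow]
    refine lt_of_le_of_lt (mul_le_of_le_one_right (by positivity) (hb1 k)) ?_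
    exact pow_lt_one₀ (norm_nonneg _) (hcd k) hp.out.ne_zero
  have h3 : Phi p b ((w a0)⁻¹ • w) = Phi p b c + Phi p b ((w a0)⁻¹ • w - c) := by
    rw [← map_add]; congr 1; abel
  have h4 : ‖Phi p b ((w a0)⁻¹ • w)‖ = 1 := by
    rw [h3, IsUltrametricDist.norm_add_eq_max_of_norm_ne_norm (by rw [h1]; exact h2.ne'), h1,
      max_eq_left h2.le]
  rw [Phi_smul, norm_mul, norm_pow, norm_inv, inv_pow, inv_mul_eq_one₀ (by positivity)] at h4
  exact h4.symm

/-- residue exponent -/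
def fz (ρ : Fin d → Fin p) : Fin d → ℤ := fun i => ((ρ i : ℕ) : ℤ)

lemma Phi_indep {K : Subfield F} (hK : TrivN K) (hR : ResN K) {x : Fin d → F} (hx : Good x)
    (b : ι → F) (hb : ∀ a, b a ∈ K)
    (hli : ∀ c : ι →₀ F, (∀ a, c a ∈ K) → Phi p b c = 0 → c = 0)
    (h : (Fin d → Fin p) → ι →₀ F) (h0 : ∑ ρ, Phi p b (h ρ) * mono x (fz p ρ) = 0) :
    ∀ ρ, h ρ = 0 := by
  classical
  by_contra hne
  push Not at hne
  obtain ⟨ρ0, hρ0⟩ := hne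
  have key : ∀ ρ, h ρ ≠ 0 → ∃ e : Fin d → ℤ,
      ‖Phi p b (h ρ) * mono x (fz p ρ)‖ = ‖mono x ((p : ℤ) • e + fz p ρ)‖ := by
    intro ρ hρ
    obtain ⟨a, ha, h1⟩ := Phi_norm p hK hR b hb hli (h ρ) hρ
    obtain ⟨e, he⟩ := hx.gen (h ρ a) (by simpa using ha)
    refine ⟨e, ?_⟩
    rw [mono_add hx.ne, mono_zsmul, norm_mul, norm_mul, h1, he, zpow_natCast, norm_pow]
  have hs : ∑ ρ, Phi p b (h ρ) * mono x (fz p ρ) =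
      ∑ ρ ∈ Finset.univ.filter (fun ρ => h ρ ≠ 0), Phi p b (h ρ) * mono x (fz p ρ) := by
    symm
    refine Finset.sum_filter_of_ne ?_
    intro ρ _ h1 h2
    apply h1; simp [h2]
  obtain ⟨ρ, hρ, h1, -⟩ := norm_sum_max (Finset.univ.filter (fun ρ => h ρ ≠ 0))
    ⟨ρ0, by simpa using hρ0⟩ (fun ρ => Phi p b (h ρ) * mono x (fz p ρ)) (by
      intro ρ hρ σ hσ hne heq
      obtain ⟨e, he⟩ := key ρ (by simpa using hρ)
      obtain ⟨f, hf⟩ := key σ (by simpa using hσ)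
      rw [he, hf] at heq
      have := hx.inj heq
      apply hne
      ext i
      have h2 := congrFun this i
      simp only [Pi.add_apply, Pi.smul_apply, smul_eq_mul, fz] at h2
      have h3 := congrArg (fun z : ℤ => z % p) h2
      simp only [Int.mul_add_emod_self_left] at h3
      rw [Int.emod_eq_of_lt (by omega) (by exact_mod_cast (ρ i).2),
        Int.emod_eq_of_lt (by omega) (by exact_mod_cast (σ i).2)] at h3
      exact_mod_cast h3)
  rw [← hs, h0, norm_zero] at h1
  obtain ⟨e, he⟩ := key ρ (by simpa using hρ)
  rw [he] at h1
  exact mono_ne hx.ne _ (norm_eq_zero.mp h1.symm)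

lemma Phi_decomp {K : Subfield F} {x : Fin d → F} (hx : Good x)
    (b : ι → F)
    (hsp : ∀ c ∈ K, ∃ w : ι →₀ F, (∀ a, w a ∈ K) ∧ c = Phi p b w)
    (r : F) (hr : r ∈ R0 K x) :
    ∃ h : (Fin d → Fin p) → ι →₀ F, (∀ ρ a, h ρ a ∈ R0 K x) ∧
      r = ∑ ρ, Phi p b (h ρ) * mono x (fz p ρ) := by
  classical
  obtain ⟨s, rfl⟩ := R0_form hx.ne hr
  clear hr
  induction s using Finsupp.induction_linear with
  | zero => exact ⟨0, by simp, by simp⟩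
  | add f g hf hg =>
    obtain ⟨h1, h1m, e1⟩ := hf
    obtain ⟨h2, h2m, e2⟩ := hg
    refine ⟨h1 + h2, fun ρ a => add_mem (h1m ρ a) (h2m ρ a), ?_⟩
    rw [Finsupp.sum_add_index' (by simp) (by intros; push_cast; ring), e1, e2,
      ← Finset.sum_add_distrib]
    refine Finset.sum_congr rfl fun ρ _ => ?_
    rw [Pi.add_apply, map_add]; ring
  | single e c =>
    rw [Finsupp.sum_single_index (by simp)]
    obtain ⟨w, hwK, hw⟩ := hsp c c.2
    have hp0 : (0 : ℤ) < p := by exact_mod_cast hp.out.pos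
    let ρ0 : Fin d → Fin p := fun i => ⟨(e i % p).toNat, by
      have h1 := Int.emod_nonneg (e i) hp0.ne'
      have h2 := Int.emod_lt_of_pos (e i) hp0
      omega⟩
    let q : Fin d → ℤ := fun i => e i / p
    have he : e = (p : ℤ) • q + fz p ρ0 := by
      ext i
      have h1 := Int.emod_nonneg (e i) hp0.ne'
      simp only [q, ρ0, fz, Pi.add_apply, Pi.smul_apply, smul_eq_mul, Int.toNat_of_nonneg h1]
      exact (Int.mul_ediv_add_emod _ _).symm
    refine ⟨Pi.single ρ0 (mono x q • w), ?_, ?_⟩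
    · intro ρ a
      by_cases h : ρ = ρ0
      · subst h
        simp only [Pi.single_eq_same, Finsupp.smul_apply, smul_eq_mul]
        exact mul_mem (mono_mem_R0 x _) (K_mem_R0 x (hwK a))
      · rw [Pi.single_eq_of_ne h]; exact zero_mem _
    · rw [Finset.sum_eq_single ρ0]
      · rw [Pi.single_eq_same, Phi_smul, ← hw]
        conv_lhs => rw [he]
        rw [mono_add hx.ne, mono_zsmul, zpow_natCast]; ring
      · intro ρ _ h
        rw [Pi.single_eq_of_ne h]; simp
      · simp

end LU
end Part8

section Part9
namespace LU
set_option linter.unusedSectionVars false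

universe u
variable {F : Type u} [NormedField F] [IsUltrametricDist F] {d : ℕ}

lemma exists_pbasis (p : ℕ) [hp : Fact p.Prime] [CharP F p] (K : Subfield F) :
    ∃ (ι : Type u) (b : ι → F), (∀ a, b a ∈ K) ∧
    (∀ c : ι →₀ F, (∀ a, c a ∈ K) → Phi p b c = 0 → c = 0) ∧
    (∀ c ∈ K, ∃ w : ι →₀ F, (∀ a, w a ∈ K) ∧ c = Phi p b w) := by
  classical
  have : CharP K p := (algebraMap K F).charP (algebraMap K F).injective p
  let E : Subfield K := (frobenius K p).fieldRange
  obtain ⟨ι, ⟨B⟩⟩ : ∃ ι : Type u, Nonempty (Module.Basis ι E K) :=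
    ⟨_, ⟨Module.Basis.ofVectorSpace E K⟩⟩
  refine ⟨ι, fun a => ((B a : K) : F), fun a => (B a).2, ?_, ?_⟩
  · intro c hc h0
    let c' : ι →₀ E := Finsupp.onFinset c.support
      (fun a => ⟨(⟨c a, hc a⟩ : K) ^ p, ⟨⟨c a, hc a⟩, rfl⟩⟩) (by
        intro a ha
        rw [Finsupp.mem_support_iff]
        intro h
        apply ha
        ext
        simp [h, hp.out.ne_zero])
    have h1 : Finsupp.linearCombination E B c' = 0 := by
      rw [Finsupp.linearCombination_apply, Finsupp.onFinset_sum _ (by simp)]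
      apply Subtype.ext
      rw [Phi_apply, Finsupp.sum] at h0
      rw [ZeroMemClass.coe_zero, ← h0, AddSubmonoidClass.coe_finsetSum]
      rfl
    have h2 : c' = 0 := by
      have := B.linearIndependent
      exact (linearIndependent_iff.mp this) _ h1
    ext a
    have h3 := congrArg (fun (z : E) => ((z : K) : F)) (DFunLike.congr_fun h2 a)
    simp [c', hp.out.ne_zero] at h3
    simpa using h3
  · intro c hc
    have hroot : ∀ e : E, ∃ r : K, r ^ p = (e : K) := fun e => e.2
    choose root hrt using hroot
    have r0 : root 0 = 0 := by
      have := hrt 0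
      simpa [hp.out.ne_zero] using this
    refine ⟨(B.repr ⟨c, hc⟩).mapRange (fun e => ((root e : K) : F)) (by simp [r0]), ?_, ?_⟩
    · intro a; simp
    · rw [Phi_apply, Finsupp.sum_mapRange_index (by simp [hp.out.ne_zero])]
      have h := B.linearCombination_repr ⟨c, hc⟩
      rw [Finsupp.linearCombination_apply] at h
      have h' := congrArg (fun z : K => (z : F)) h
      simp only [Finsupp.sum, AddSubmonoidClass.coe_finsetSum] at h'
      rw [Finsupp.sum]
      refine h'.symm.trans ?_
      refine Finset.sum_congr rfl fun a _ => ?_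
      rw [← SubmonoidClass.coe_pow, hrt]
      rfl

lemma S4 (p : ℕ) [hp : Fact p.Prime] [CharP F p] {K : Subfield F} (hK : TrivN K) (hR : ResN K)
    {x : Fin d → F} (hx : Good x) (m : ℕ) (P : ℕ → F) (hP : ∀ j, P j ∈ R0 K x)
    (j0 : ℕ) (hj0 : j0 ≤ m) (hj0' : P j0 ≠ 0) (y : F)
    (h : ∑ j ∈ Finset.range (m + 1), P j * y ^ (j * p) = 0) :
    ∃ Q : Polynomial F, Q ≠ 0 ∧ (∀ i, Q.coeff i ∈ R0 K x) ∧ Q.natDegree ≤ m ∧ Q.eval y = 0 := by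
  classical
  obtain ⟨ι, b, hb, hli, hsp⟩ := exists_pbasis p K
  choose g hg hge using fun j => Phi_decomp p hx b hsp (P j) (hP j)
  have h1 := Phi_indep p hK hR hx b hb hli
    (fun ρ => ∑ j ∈ Finset.range (m + 1), y ^ j • g j ρ) (by
      rw [← h]
      simp only [map_sum, Phi_smul, Finset.sum_mul]
      rw [Finset.sum_comm]
      refine Finset.sum_congr rfl fun j _ => ?_
      conv_rhs => rw [hge j]
      rw [Finset.sum_mul]
      refine Finset.sum_congr rfl fun ρ _ => ?_
      rw [← pow_mul]; ring)
  have h2 : ∃ ρ, g j0 ρ ≠ 0 := by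
    by_contra hne
    push Not at hne
    apply hj0'
    rw [hge j0]
    simp [hne]
  obtain ⟨ρ, hρ⟩ := h2
  obtain ⟨a, ha⟩ := Finsupp.ne_iff.mp hρ
  have hco : ∀ i, (∑ j ∈ Finset.range (m + 1), Polynomial.monomial j (g j ρ a)).coeff i =
      if i < m + 1 then g i ρ a else 0 := by
    intro i
    rw [Polynomial.finsetSum_coeff]
    simp [Polynomial.coeff_monomial]
  refine ⟨∑ j ∈ Finset.range (m + 1), Polynomial.monomial j (g j ρ a), ?_, ?_, ?_, ?_⟩
  · intro h0
    have := hco j0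
    rw [h0, if_pos (by omega)] at this
    exact ha (by simpa using this.symm)
  · intro i
    rw [hco]
    split_ifs
    · exact hg _ _ _
    · exact zero_mem _
  · rw [Polynomial.natDegree_le_iff_coeff_eq_zero]
    intro i hi
    rw [hco, if_neg (by omega)]
  · have := DFunLike.congr_fun (h1 ρ) a
    rw [Polynomial.eval_finsetSum]
    simp only [Finsupp.finsetSum_apply, Finsupp.smul_apply, smul_eq_mul, Finsupp.zero_apply] at this
    rw [← this]
    refine Finset.sum_congr rfl fun j _ => ?_
    rw [Polynomial.eval_monomial]; ring

end LU
end Part9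

section Part10
namespace LU
set_option linter.unusedSectionVars false

universe u
variable {F : Type u} [NormedField F] [IsUltrametricDist F] {d : ℕ}

lemma adjoin_le_R0 (K : Subfield F) (x : Fin d → F) (y : F)
    (hy : y ∈ Algebra.adjoin K (Set.range x)) : y ∈ R0 K x := by
  induction hy using Algebra.adjoin_induction with
  | mem y hy =>
    obtain ⟨i, rfl⟩ := hy
    rw [← zpow_one (x i), ← mono_single]
    exact mono_mem_R0 x _
  | algebraMap c => exact K_mem_R0 x c.2
  | add a b _ _ h1 h2 => exact add_mem h1 h2
  | mul a b _ _ h1 h2 => exact mul_mem h1 h2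

lemma exists_poly (K : Subfield F) (x : Fin d → F) (ζ : F)
    (h : IsAlgebraic (IntermediateField.adjoin K (Set.range x)) ζ) :
    ∃ f : Polynomial F, f ≠ 0 ∧ (∀ i, f.coeff i ∈ R0 K x) ∧ f.eval ζ = 0 := by
  have h1 : IsAlgebraic (Algebra.adjoin K (Set.range x)) ζ :=
    IntermediateField.isAlgebraic_adjoin_iff.mp h
  obtain ⟨q, hq, h2⟩ := h1
  refine ⟨q.map (algebraMap _ F), ?_, ?_, ?_⟩
  · rw [Ne, Polynomial.map_eq_zero_iff]
    · exact hq
    · exact Subtype.val_injective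
  · intro i
    rw [Polynomial.coeff_map]
    exact adjoin_le_R0 K x _ (q.coeff i).2
  · rw [Polynomial.eval_map_algebraMap]; exact h2

lemma exists_sep {K : Subfield F} (hK : TrivN K) (hR : ResN K)
    {x : Fin d → F} (hx : Good x) (ζ : F)
    (h : IsAlgebraic (IntermediateField.adjoin K (Set.range x)) ζ) :
    ∃ f : Polynomial F, (∀ i, f.coeff i ∈ R0 K x) ∧ f.eval ζ = 0 ∧
      f.derivative.eval ζ ≠ 0 := by
  classical
  have hex : ∃ n, ∃ f : Polynomial F, f ≠ 0 ∧ (∀ i, f.coeff i ∈ R0 K x) ∧ f.eval ζ = 0 ∧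
      f.natDegree = n := by
    obtain ⟨f, h1, h2, h3⟩ := exists_poly K x ζ h
    exact ⟨_, f, h1, h2, h3, rfl⟩
  obtain ⟨f, h1, h2, h3, h4⟩ := Nat.find_spec hex
  have hmin : ∀ g : Polynomial F, g ≠ 0 → (∀ i, g.coeff i ∈ R0 K x) → g.eval ζ = 0 →
      f.natDegree ≤ g.natDegree := by
    intro g g1 g2 g3
    rw [h4]
    exact Nat.find_min' hex ⟨g, g1, g2, g3, rfl⟩
  refine ⟨f, h2, h3, ?_⟩
  intro h5
  have hpos : 0 < f.natDegree := by
    by_contra h0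
    have h0 : f.natDegree = 0 := by omega
    rw [Polynomial.eq_C_of_natDegree_eq_zero h0, Polynomial.eval_C] at h3
    apply h1
    rw [Polynomial.eq_C_of_natDegree_eq_zero h0, h3, Polynomial.C_0]
  have hder : f.derivative = 0 := by
    by_contra hne
    have := hmin f.derivative hne (by
      intro i
      rw [Polynomial.coeff_derivative]
      exact mul_mem (h2 _) (by exact_mod_cast natCast_mem (R0 K x) (i + 1))) h5
    have := Polynomial.natDegree_derivative_lt hpos.ne'
    omega
  rcases CharP.exists' F with h0 | ⟨p, hp, hc⟩
  · have := Polynomial.derivative_eq_zero.mp hder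
    omega
  · set g := Polynomial.contract p f with hg
    have hfg : Polynomial.expand F p g = f := Polynomial.expand_contract p hder hp.out.ne_zero
    have hdeg : f.natDegree = g.natDegree * p := by rw [← hfg, Polynomial.natDegree_expand]
    have hg0 : g ≠ 0 := by rintro h0; rw [h0, map_zero] at hfg; exact h1 hfg.symm
    obtain ⟨Q, q1, q2, q3, q4⟩ := S4 p hK hR hx g.natDegree (fun j => g.coeff j) (by
      intro j
      rw [hg, Polynomial.coeff_contract hp.out.ne_zero]
      exact h2 _) g.natDegree le_rfl (by simpa using hg0) ζ (by
      have e : f.eval ζ = ∑ j ∈ Finset.range (g.natDegree + 1), g.coeff j * ζ ^ (j * p) := by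
        rw [← hfg, Polynomial.expand_eval, Polynomial.eval_eq_sum_range]
        refine Finset.sum_congr rfl fun j _ => ?_
        rw [← pow_mul, mul_comm p]
      rw [← e, h3])
    have h6 := hmin Q q1 q2 q4
    have h7 := hp.out.two_le
    rw [hdeg] at h6 hpos
    have : 0 < g.natDegree := Nat.pos_of_mul_pos_right hpos |> fun _ => by
      by_contra h; simp at h; rw [h] at hpos; simp at hpos
    nlinarith

end LU
end Part10

section Part11
namespace LU
set_option linter.unusedSectionVars false

universe u
variable {F : Type u} [NormedField F] [IsUltrametricDist F] {d : ℕ}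
open Polynomial

/-- norm at most one -/
def NN (F : Type u) [NormedField F] [IsUltrametricDist F] : Subring F where
  carrier := {y | ‖y‖ ≤ 1}
  mul_mem' {a b} ha hb := by
    simp only [Set.mem_ofPred_eq] at *
    rw [norm_mul]; exact mul_le_one₀ ha (norm_nonneg _) hb
  one_mem' := by simp
  add_mem' {a b} ha hb := (IsUltrametricDist.norm_add_le_max a b).trans (max_le ha hb)
  zero_mem' := by simp
  neg_mem' {a} ha := by simpa using ha

lemma mem_NN (y : F) : y ∈ NN F ↔ ‖y‖ ≤ 1 := Iff.rfl

lemma taylor_mem (S : Subring F) (f : F[X]) (hf : ∀ i, f.coeff i ∈ S) (a : F) (ha : a ∈ S) (n : ℕ) :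
    (taylor a f).coeff n ∈ S := by
  rw [taylor_coeff, eval_eq_sum_range]
  refine sum_mem fun i _ => mul_mem ?_ (pow_mem ha _)
  rw [hasseDeriv_coeff]
  exact mul_mem (natCast_mem _ _) (hf _)

lemma hensel_form {K : Subfield F} (hK : TrivN K) (hR : ResN K) {x : Fin d → F} (hx : Good x)
    (hd : 0 < d) [FiniteDimensional (IntermediateField.adjoin K (Set.range x)) F]
    (ζ : F) (hζ : ‖ζ‖ ≤ 1) :
    ∃ (b π u : F) (g : F[X]), (b ∈ R0 K x ∧ ‖b‖ ≤ 1) ∧ (π ∈ R0 K x ∧ ‖π‖ ≤ 1) ∧ ‖u‖ ≤ 1 ∧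
      ζ = b + π * u ∧ (∀ i, g.coeff i ∈ R0 K x ∧ ‖g.coeff i‖ ≤ 1) ∧ g.eval u = 0 ∧
      ‖g.derivative.eval u‖ = 1 := by
  classical
  obtain ⟨f0, hf0, hf0', hf0''⟩ := exists_sep hK hR hx ζ
    (Algebra.IsAlgebraic.isAlgebraic ζ)
  let i0 : Fin d := ⟨0, hd⟩
  have hx0 : 0 < ‖x i0‖ := norm_pos_iff.mpr (hx.ne i0)
  obtain ⟨N, hN⟩ := exists_pow_lt_of_lt_one
    (show (0:ℝ) < (1 + ∑ i ∈ f0.support, ‖f0.coeff i‖)⁻¹ by positivity) (hx.lt i0)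
  have hxm : ∀ n : ℤ, x i0 ^ n ∈ R0 K x := by
    intro n
    rw [← mono_single]; exact mono_mem_R0 x _
  obtain ⟨f, hf1, hfN, hf2, hf3⟩ : ∃ f : F[X], (∀ i, f.coeff i ∈ R0 K x) ∧
      (∀ i, f.coeff i ∈ NN F) ∧ f.eval ζ = 0 ∧ f.derivative.eval ζ ≠ 0 := by
    refine ⟨C (x i0 ^ N) * f0, ?_, ?_, ?_, ?_⟩
    · intro i
      rw [coeff_C_mul]
      exact mul_mem (by exact_mod_cast hxm N) (hf0 i)
    · intro i
      rw [mem_NN, coeff_C_mul, norm_mul, norm_pow]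
      by_cases hi : i ∈ f0.support
      · have h1 : ‖f0.coeff i‖ ≤ ∑ i ∈ f0.support, ‖f0.coeff i‖ :=
          Finset.single_le_sum (f := fun i => ‖f0.coeff i‖) (fun _ _ => norm_nonneg _) hi
        have h2 : 0 ≤ ‖f0.coeff i‖ := norm_nonneg _
        rw [lt_inv_comm₀ (by positivity) (by positivity)] at hN
        have h3 : ‖f0.coeff i‖ ≤ (‖x i0‖ ^ N)⁻¹ := by linarith
        rwa [← le_inv_mul_iff₀ (by positivity), mul_one]
      · rw [notMem_support_iff.mp hi]; simp
    · rw [eval_mul, hf0', mul_zero]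
    · rw [derivative_C_mul, eval_mul, eval_C]
      exact mul_ne_zero (pow_ne_zero _ (hx.ne i0)) hf0''
  obtain ⟨e, he⟩ := hx.gen _ hf3
  set z := mono x e with hz
  have hz0 : z ≠ 0 := mono_ne hx.ne e
  have hzR : z ∈ R0 K x := mono_mem_R0 x e
  have hzR' : z⁻¹ ∈ R0 K x := by rw [hz, ← mono_neg]; exact mono_mem_R0 x _
  have hz1 : ‖z‖ ≤ 1 := by
    rw [← he, ← mem_NN, eval_eq_sum_range]
    refine sum_mem fun i _ => mul_mem ?_ (pow_mem hζ _)
    rw [coeff_derivative]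
    exact mul_mem (hfN _) (by exact_mod_cast natCast_mem (NN F) (i + 1))
  set π := z * x i0 with hπ
  have hπ0 : π ≠ 0 := mul_ne_zero hz0 (hx.ne i0)
  have hπz : ‖π‖ ≤ ‖z‖ := by
    rw [hπ, norm_mul]; exact mul_le_of_le_one_right (norm_nonneg _) (hx.lt i0).le
  have hπ1 : ‖π‖ ≤ 1 := hπz.trans hz1
  have hπR : π ∈ R0 K x := mul_mem hzR (by simpa using hxm 1)
  have hπR' : π⁻¹ ∈ R0 K x := by
    rw [hπ, mul_inv]; exact mul_mem hzR' (by simpa using hxm (-1))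
  obtain ⟨b, hbR, hb⟩ := dense hK hR hx hd ζ ‖π‖ (norm_pos_iff.mpr hπ0)
  set u := (ζ - b) / π with hu
  have hu1 : ‖u‖ ≤ 1 := by
    rw [hu, norm_div]; exact div_le_one_of_le₀ hb.le (norm_nonneg _)
  have hζu : ζ = b + π * u := by rw [hu]; field_simp; ring
  have hb1 : ‖b‖ ≤ 1 := by
    have h : b = ζ - (ζ - b) := by ring
    rw [h, ← mem_NN]
    exact sub_mem hζ (hb.le.trans hπ1)
  set g0 : F[X] := C (π * z)⁻¹ * (taylor ζ f).comp (C π * X) with hg0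
  have hg0c : ∀ n, g0.coeff n = (π * z)⁻¹ * ((taylor ζ f).coeff n * π ^ n) := by
    intro n
    rw [hg0, coeff_C_mul, comp_C_mul_X_coeff]
  have hg00 : g0.coeff 0 = 0 := by rw [hg0c, taylor_coeff_zero, hf2]; simp
  have hg01 : ‖g0.coeff 1‖ = 1 := by
    rw [hg0c, taylor_coeff_one]
    have : (π * z)⁻¹ * (eval ζ (derivative f) * π ^ 1) = eval ζ (derivative f) / z := by
      field_simp
    rw [this, norm_div, he]
    exact div_self (norm_ne_zero_iff.mpr hz0)
  have hg0N : ∀ n, g0.coeff n ∈ NN F := by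
    intro n
    rcases n with _ | _ | n
    · rw [hg00]; exact zero_mem _
    · exact hg01.le
    · rw [hg0c]
      have : (π * z)⁻¹ * ((taylor ζ f).coeff (n + 1 + 1) * π ^ (n + 1 + 1)) =
        (taylor ζ f).coeff (n + 1 + 1) * π ^ n * (π / z) := by field_simp; ring
      rw [this]
      refine mul_mem (mul_mem (taylor_mem _ _ hfN _ hζ _) (pow_mem hπ1 _)) ?_
      rw [mem_NN, norm_div]
      exact div_le_one_of_le₀ hπz (norm_nonneg _)
  have hgg : taylor (-u) g0 = C (π * z)⁻¹ * (taylor b f).comp (C π * X) := by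
    rw [hg0]
    simp only [taylor_apply, mul_comp, C_comp, comp_assoc, add_comp, X_comp]
    congr 2
    rw [hζu]
    simp only [C_add, C_mul, C_neg]
    ring
  refine ⟨b, π, u, taylor (-u) g0, ⟨hbR, hb1⟩, ⟨hπR, hπ1⟩, hu1, hζu, ?_, ?_, ?_⟩
  · intro i
    refine ⟨?_, taylor_mem (NN F) g0 hg0N _ (neg_mem (show u ∈ NN F from hu1)) i⟩
    rw [hgg, coeff_C_mul, comp_C_mul_X_coeff, mul_inv]
    exact mul_mem (mul_mem hπR' hzR') (mul_mem (taylor_mem _ _ hf1 _ hbR _) (pow_mem hπR _))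
  · rw [taylor_eval, add_neg_cancel, ← coeff_zero_eq_eval_zero, hg00]
  · rw [← taylor_coeff_one, taylor_taylor, add_neg_cancel, taylor_zero, hg01]

end LU
end Part11

section Part12
namespace LU
set_option linter.unusedSectionVars false

universe u
variable {F : Type u} [NormedField F] [IsUltrametricDist F] {d : ℕ}
open MvPolynomial

lemma coeff_mem_of_range {σ : Type*} (S : Subring F) (f : MvPolynomial σ F)
    (hf : f ∈ (MvPolynomial.map (σ := σ) S.subtype).range) (m : σ →₀ ℕ) : f.coeff m ∈ S := by
  obtain ⟨q, rfl⟩ := hf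
  rw [coeff_map]
  exact (q.coeff m).2

lemma X_mem_range {σ : Type*} (S : Subring F) (j : σ) :
    (X j : MvPolynomial σ F) ∈ (MvPolynomial.map (σ := σ) S.subtype).range :=
  ⟨X j, by simp⟩

lemma C_mem_range {σ : Type*} (S : Subring F) (c : F) (hc : c ∈ S) :
    (C c : MvPolynomial σ F) ∈ (MvPolynomial.map (σ := σ) S.subtype).range :=
  ⟨C ⟨c, hc⟩, by simp⟩

lemma assemble {K : Subfield F} (hK : TrivN K) (hR : ResN K) {x : Fin d → F} (hx : Good x)
    (hd : 0 < d) [FiniteDimensional (IntermediateField.adjoin K (Set.range x)) F]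
    (n : ℕ) (ζ : Fin n → F) (hζ : ∀ k, ‖ζ k‖ ≤ 1) :
    ∃ x' : Fin d → F, Good x' ∧ ∃ u : Fin n → F, (∀ k, ‖u k‖ ≤ 1) ∧
      ∃ f : Fin (n + n) → MvPolynomial (Fin (n + n)) F,
        (∀ i m, (f i).coeff m ∈ P0 K x') ∧
        (∀ i j : Fin (n + n), (i : ℕ) < (j : ℕ) → degreeOf j (f i) = 0) ∧
        (∀ i, eval (Fin.append u ζ) (f i) = 0) ∧
        ‖Matrix.det (Matrix.of fun i j : Fin (n + n) =>
          eval (Fin.append u ζ) (pderiv j (f i)))‖ = 1 := by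
  classical
  choose b π u g hb hπ hu hζe hg hg0 hg1 using fun k => hensel_form hK hR hx hd (ζ k) (hζ k)
  obtain ⟨x', hx', -, hS⟩ := R0_perron hK hx
    (Finset.univ.image b ∪ Finset.univ.image π ∪
      Finset.univ.biUnion fun k => (g k).support.image (g k).coeff) (by
      intro y hy
      simp only [Finset.mem_union, Finset.mem_image, Finset.mem_biUnion, Finset.mem_univ,
        true_and] at hy
      rcases hy with (⟨k, rfl⟩ | ⟨k, rfl⟩) | ⟨k, i, -, rfl⟩
      · exact hb k
      · exact hπ k
      · exact hg k i)
  have hbP : ∀ k, b k ∈ P0 K x' := fun k => hS _ (by simp)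
  have hπP : ∀ k, π k ∈ P0 K x' := fun k => hS _ (by simp)
  have hgP : ∀ k i, (g k).coeff i ∈ P0 K x' := by
    intro k i
    by_cases h : i ∈ (g k).support
    · exact hS _ (Finset.mem_union_right _ (Finset.mem_biUnion.mpr
        ⟨k, Finset.mem_univ _, Finset.mem_image_of_mem _ h⟩))
    · rw [Polynomial.notMem_support_iff.mp h]; exact zero_mem _
  let f : Fin (n + n) → MvPolynomial (Fin (n + n)) F :=
    Fin.append (fun k => Polynomial.aeval (X (Fin.castAdd n k)) (g k))
      (fun k => X (Fin.natAdd n k) - C (b k) - C (π k) * X (Fin.castAdd n k))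
  have hfl : ∀ k, f (Fin.castAdd n k) = Polynomial.aeval (X (Fin.castAdd n k)) (g k) :=
    fun k => Fin.append_left _ _ k
  have hfr : ∀ k, f (Fin.natAdd n k) =
      X (Fin.natAdd n k) - C (b k) - C (π k) * X (Fin.castAdd n k) :=
    fun k => Fin.append_right _ _ k
  have hev : ∀ (q : Polynomial F) (j : Fin (n + n)) (η : Fin (n + n) → F),
      eval η (Polynomial.aeval (X j : MvPolynomial (Fin (n + n)) F) q) = q.eval (η j) := by
    intro q j η
    have := Polynomial.aeval_algHom_apply (aeval η : MvPolynomial (Fin (n+n)) F →ₐ[F] F) (X j) q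
    rw [aeval_X, aeval_eq_eval] at this
    exact this.symm
  have hsup : ∀ i, f i ∈ supported F (Set.Iic i) := by
    intro i
    induction i using Fin.addCases with
    | left k =>
      rw [hfl]
      rw [Polynomial.aeval_eq_sum_range]
      exact sum_mem fun i _ => Subalgebra.smul_mem _
        (pow_mem (X_mem_supported.mpr (Set.mem_Iic.mpr le_rfl)) _) _
    | right k =>
      rw [hfr]
      refine sub_mem (sub_mem (X_mem_supported.mpr (Set.mem_Iic.mpr le_rfl))
        (Subalgebra.algebraMap_mem _ _)) (mul_mem (Subalgebra.algebraMap_mem _ _)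
          (X_mem_supported.mpr ?_))
      rw [Set.mem_Iic, Fin.le_def]; simp
  have hvars : ∀ i j : Fin (n + n), i < j → j ∉ (f i).vars := by
    intro i j hij hj
    exact absurd (Set.mem_Iic.mp (mem_supported.mp (hsup i) hj)) (not_le.mpr hij)
  refine ⟨x', hx', u, hu, f, ?_, ?_, ?_, ?_⟩
  · intro i
    apply coeff_mem_of_range
    induction i using Fin.addCases with
    | left k =>
      rw [hfl, Polynomial.aeval_eq_sum_range]
      refine sum_mem fun i _ => ?_
      rw [smul_eq_C_mul]
      exact mul_mem (C_mem_range _ _ (hgP k i)) (pow_mem (X_mem_range _ _) _)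
    | right k =>
      rw [hfr]
      exact sub_mem (sub_mem (X_mem_range _ _) (C_mem_range _ _ (hbP k)))
        (mul_mem (C_mem_range _ _ (hπP k)) (X_mem_range _ _))
  · intro i j hij
    have := hvars i j hij
    rw [mem_vars_iff_degreeOf_ne_zero] at this
    simpa using this
  · intro i
    induction i using Fin.addCases with
    | left k => rw [hfl, hev, Fin.append_left]; exact hg0 k
    | right k =>
      rw [hfr]
      simp only [map_sub, map_mul, eval_X, eval_C, Fin.append_right, Fin.append_left]
      rw [hζe k]; ring
  · rw [Matrix.det_of_isLowerTriangular]
    · rw [norm_prod]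
      refine Finset.prod_eq_one fun i _ => ?_
      rw [Matrix.of_apply]
      induction i using Fin.addCases with
      | left k =>
        rw [hfl, Derivation.map_aeval, pderiv_X_self, smul_eq_mul, mul_one, hev, Fin.append_left]
        exact hg1 k
      | right k =>
        rw [hfr]
        have h1 : (Fin.castAdd n k) ≠ Fin.natAdd n k := by
          intro h
          have := congrArg Fin.val h
          simp at this
          have := k.2
          omega
        rw [map_sub, map_sub, map_sub, pderiv_C_mul, pderiv_X_self, pderiv_C, pderiv_X_of_ne h1]
        simp
    · intro i j hij
      rw [Matrix.of_apply, pderiv_eq_zero_of_notMem_vars (hvars i j hij), map_zero]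

end LU
end Part12

section Part13
namespace LU
set_option linter.unusedSectionVars false

universe u
variable {F : Type u} [NormedField F] [IsUltrametricDist F] {d : ℕ} {K : Subfield F}

lemma norm_poly' (hK : TrivN K) {x : Fin d → F}
    (hinj : ∀ e f : Fin d → ℤ, ‖mono x e‖ = ‖mono x f‖ → e = f) (p : MvPolynomial (Fin d) K)
    (hp : p ≠ 0) : ∃ ν ∈ p.support, ‖MvPolynomial.aeval x p‖ = ‖mono x (nz ν)‖ := by
  have key : ∀ e ∈ p.support, ‖((p.coeff e : K) : F) * mono x (nz e)‖ = ‖mono x (nz e)‖ := by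
    intro e he
    rw [norm_mul, hK _ (p.coeff e).2 (by simpa using he), one_mul]
  obtain ⟨e, he, h1, h2⟩ := norm_sum_max p.support (by simpa using hp)
    (fun e => ((p.coeff e : K) : F) * mono x (nz e)) (by
      intro i hi j hj hij
      simp only [key i hi, key j hj]
      intro h
      apply hij
      have := hinj _ _ h
      ext k
      have := congrFun this k
      simpa [nz] using this)
  refine ⟨e, he, ?_⟩
  rw [key e he] at h1
  rw [← h1, MvPolynomial.aeval_def, MvPolynomial.eval₂_eq']
  simp only [mono_nz]
  rfl

lemma indep_of_inj (hK : TrivN K) {x : Fin d → F} (hne : ∀ i, x i ≠ 0)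
    (hinj : ∀ e f : Fin d → ℤ, ‖mono x e‖ = ‖mono x f‖ → e = f) :
    AlgebraicIndependent K x := by
  rw [algebraicIndependent_iff]
  intro p hp
  by_contra h
  obtain ⟨ν, -, h1⟩ := norm_poly' hK hinj p h
  rw [hp, norm_zero] at h1
  exact mono_ne hne _ (norm_eq_zero.mp h1.symm)

lemma adjoin_norm (hK : TrivN K) {x : Fin d → F} (hne : ∀ i, x i ≠ 0)
    (hinj : ∀ e f : Fin d → ℤ, ‖mono x e‖ = ‖mono x f‖ → e = f) (w : F)
    (hw : w ∈ IntermediateField.adjoin K (Set.range x)) (hw0 : w ≠ 0) :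
    ∃ e, ‖w‖ = ‖mono x e‖ := by
  rw [IntermediateField.mem_adjoin_range_iff] at hw
  obtain ⟨r, s, rfl⟩ := hw
  have hr : r ≠ 0 := by rintro rfl; simp at hw0
  have hs : s ≠ 0 := by rintro rfl; simp at hw0
  obtain ⟨ν, -, h1⟩ := norm_poly' hK hinj r hr
  obtain ⟨μ, -, h2⟩ := norm_poly' hK hinj s hs
  exact ⟨nz ν - nz μ, by rw [mono_sub hne, norm_div, norm_div, h1, h2]⟩

lemma transBasis {t x : Fin d → F} (ht : IsTranscendenceBasis K t)
    (hx : AlgebraicIndependent K x) : IsTranscendenceBasis K x := by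
  apply hx.isTranscendenceBasis_of_lift_trdeg_le_of_finite
  rw [← ht.lift_cardinalMk_eq_trdeg]

lemma finDim {x : Fin d → F} (hx : IsTranscendenceBasis K x) (S : Finset F)
    (hS : IntermediateField.adjoin K (S : Set F) = ⊤) :
    FiniteDimensional (IntermediateField.adjoin K (Set.range x)) F := by
  have halg := hx.isAlgebraic_field
  have h1 : IntermediateField.adjoin (IntermediateField.adjoin K (Set.range x)) (S : Set F) = ⊤ :=
    IntermediateField.adjoin_eq_top_of_adjoin_eq_top K hS
  have h2 := IntermediateField.finiteDimensional_adjoin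
    (K := IntermediateField.adjoin K (Set.range x)) (S := (S : Set F))
    (fun y _ => Algebra.IsIntegral.isIntegral y)
  rw [h1] at h2
  exact IntermediateField.topEquiv.toLinearEquiv.finiteDimensional

lemma pow_norm (hK : TrivN K) {x : Fin d → F} (hne : ∀ i, x i ≠ 0)
    (hinj : ∀ e f : Fin d → ℤ, ‖mono x e‖ = ‖mono x f‖ → e = f)
    [FiniteDimensional (IntermediateField.adjoin K (Set.range x)) F] :
    ∃ M : ℕ, 0 < M ∧ ∀ y : F, y ≠ 0 → ∃ e, ‖y‖ ^ M = ‖mono x e‖ := by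
  classical
  let M0 := IntermediateField.adjoin K (Set.range x)
  let N := Module.finrank M0 F
  refine ⟨N.factorial, Nat.factorial_pos _, ?_⟩
  intro y hy
  have hyint : IsIntegral M0 y := Algebra.IsIntegral.isIntegral y
  let p := minpoly M0 y
  have hp0 : p ≠ 0 := minpoly.ne_zero hyint
  have hdeg : p.natDegree ≤ N := minpoly.natDegree_le y
  have hs : ∑ i ∈ p.support, ((p.coeff i : M0) : F) * y ^ i = 0 := by
    have := minpoly.aeval M0 y
    rw [Polynomial.aeval_def, Polynomial.eval₂_eq_sum, Polynomial.sum_def] at this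
    exact this
  have hne' : ∀ i ∈ p.support, ((p.coeff i : M0) : F) ≠ 0 := by
    intro i hi; simpa using hi
  obtain ⟨i, hi, j, hj, hij, heq⟩ : ∃ i ∈ p.support, ∃ j ∈ p.support, i < j ∧
      ‖((p.coeff i : M0) : F) * y ^ i‖ = ‖((p.coeff j : M0) : F) * y ^ j‖ := by
    by_contra hcon
    push Not at hcon
    obtain ⟨i, hi, h1, -⟩ := norm_sum_max p.support (by simpa using hp0)
      (fun i => ((p.coeff i : M0) : F) * y ^ i) (by
        intro i hi j hj hij
        rcases lt_or_gt_of_ne hij with h | h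
        · exact hcon i hi j hj h
        · exact (hcon j hj i hi h).symm)
    rw [hs, norm_zero] at h1
    exact mul_ne_zero (hne' i hi) (pow_ne_zero _ hy) (norm_eq_zero.mp h1.symm)
  obtain ⟨e, he⟩ := adjoin_norm hK hne hinj (((p.coeff i : M0) : F) / ((p.coeff j : M0) : F))
    (div_mem (p.coeff i).2 (p.coeff j).2) (div_ne_zero (hne' i hi) (hne' j hj))
  have h1 : ‖y‖ ^ (j - i) = ‖mono x e‖ := by
    rw [← he, norm_div, eq_div_iff (norm_ne_zero_iff.mpr (hne' j hj))]
    have hyi : ‖y‖ ^ i ≠ 0 := pow_ne_zero _ (norm_ne_zero_iff.mpr hy)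
    apply mul_right_cancel₀ hyi
    rw [norm_mul, norm_mul, norm_pow, norm_pow] at heq
    rw [heq, mul_right_comm, ← pow_add, Nat.sub_add_cancel hij.le, mul_comm]
  have h2 : (j - i) ∣ N.factorial := by
    apply Nat.dvd_factorial (by omega)
    have := Polynomial.le_natDegree_of_mem_supp j hj
    omega
  obtain ⟨k, hk⟩ := h2
  refine ⟨(k : ℤ) • e, ?_⟩
  rw [hk, pow_mul, h1, mono_zsmul, zpow_natCast, norm_pow]

lemma mono_sum {ι : Type*} {x : Fin d → F} (hx : ∀ i, x i ≠ 0) (s : Finset ι)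
    (f : ι → Fin d → ℤ) : mono x (∑ i ∈ s, f i) = ∏ i ∈ s, mono x (f i) := by
  classical
  induction s using Finset.induction_on with
  | empty => simp
  | insert a s ha ih => rw [Finset.sum_insert ha, Finset.prod_insert ha, mono_add hx, ih]

lemma good_of_lattice {x : Fin d → F} (hne : ∀ i, x i ≠ 0)
    (hind : ∀ e : Fin d → ℤ, ‖mono x e‖ = 1 → e = 0)
    (M : ℕ) (hM : 0 < M) (hy : ∀ y : F, y ≠ 0 → ∃ e, ‖y‖ ^ M = ‖mono x e‖) :
    ∃ x' : Fin d → F, Good x' := by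
  classical
  let L : Submodule ℤ (Fin d → ℤ) := AddSubgroup.toIntSubmodule
    { carrier := {e | ∃ y : F, y ≠ 0 ∧ ‖y‖ ^ M = ‖mono x e‖}
      zero_mem' := ⟨1, one_ne_zero, by simp⟩
      add_mem' := by
        rintro a b ⟨y, hy, h1⟩ ⟨z, hz, h2⟩
        exact ⟨y * z, mul_ne_zero hy hz, by rw [mono_add hne, norm_mul, norm_mul, mul_pow, h1, h2]⟩
      neg_mem' := by
        rintro a ⟨y, hy, h1⟩
        exact ⟨y⁻¹, inv_ne_zero hy, by rw [mono_neg, norm_inv, norm_inv, inv_pow, h1]⟩ }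
  have hL : ∀ e, e ∈ L ↔ ∃ y : F, y ≠ 0 ∧ ‖y‖ ^ M = ‖mono x e‖ := fun e => Iff.rfl
  obtain ⟨n, ⟨B⟩⟩ := Submodule.nonempty_basis_of_pid (Pi.basisFun ℤ (Fin d)) L
  have hn : n = d := by
    have h1 : Module.finrank ℤ L = n := by simpa using Module.finrank_eq_card_basis B
    have h2 := Submodule.finrank_le L
    have hmem : ∀ e : Fin d → ℤ, (M : ℤ) • e ∈ L := by
      intro e
      rw [hL]
      exact ⟨mono x e, mono_ne hne e, by rw [mono_zsmul, zpow_natCast, norm_pow]⟩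
    have h3 := LinearMap.finrank_le_finrank_of_injective
      (f := (LinearMap.lsmul ℤ (Fin d → ℤ) (M : ℤ)).codRestrict L hmem) (by
        intro a b hab
        have := congrArg Subtype.val hab
        exact smul_right_injective _ (by exact_mod_cast hM.ne') this)
    simp at h2 h3
    omega
  subst hn
  have hB : ∀ i, ∃ y : F, y ≠ 0 ∧ ‖y‖ ^ M = ‖mono x (B i : Fin n → ℤ)‖ := fun i => (B i).2
  choose y hy0 hyB using hB
  have hmono : ∀ c : Fin n → ℤ, ‖mono y c‖ ^ M =
      ‖mono x (∑ i, c i • (B i : Fin n → ℤ))‖ := by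
    intro c
    rw [mono_sum hne, mono, norm_prod, norm_prod, ← Finset.prod_pow]
    refine Finset.prod_congr rfl fun i _ => ?_
    rw [mono_zsmul, norm_zpow, norm_zpow, ← hyB, ← zpow_natCast, ← zpow_natCast, zpow_comm]
  have hgen : ∀ z : F, z ≠ 0 → ∃ c, ‖z‖ = ‖mono y c‖ := by
    intro z hz
    obtain ⟨e, he⟩ := hy z hz
    let e' : L := ⟨e, z, hz, he⟩
    refine ⟨fun i => B.repr e' i, ?_⟩
    refine (pow_left_inj₀ (norm_nonneg _) (norm_nonneg _) hM.ne').mp ?_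
    rw [hmono, he]
    congr 2
    have := congrArg L.subtype (B.sum_repr e')
    rw [map_sum] at this
    exact this.symm
  have hin : ∀ c : Fin n → ℤ, ‖mono y c‖ = 1 → c = 0 := by
    intro c hc
    have h1 := hmono c
    rw [hc, one_pow] at h1
    have h2 := hind _ h1.symm
    have h3 : ∑ i, c i • B i = 0 := by
      apply Subtype.ext
      simpa using h2
    have := Fintype.linearIndependent_iff.mp B.linearIndependent c h3
    ext i; exact this i
  let s : Fin n → ℤ := fun i => if ‖y i‖ < 1 then 1 else -1
  have hss : ∀ i, s i * s i = 1 := by intro i; simp only [s]; split_ifs <;> norm_num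
  have hm : ∀ e, mono (fun i => y i ^ s i) e = mono y (s * e) := by
    intro e
    simp only [mono, Pi.mul_apply, zpow_mul]
  refine ⟨fun i => y i ^ s i, fun i => zpow_ne_zero _ (hy0 i), ?_, ?_, ?_⟩
  · intro i
    simp only [s]
    split_ifs with h
    · simpa using h
    · rw [zpow_neg, zpow_one, norm_inv]
      apply inv_lt_one_of_one_lt₀
      refine lt_of_le_of_ne (not_lt.mp h) fun h1 => ?_
      have := hin (Pi.single i 1) (by rw [mono_single, zpow_one, ← h1])
      simpa using congrFun this i
  · intro z hz
    obtain ⟨c, hc⟩ := hgen z hz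
    refine ⟨s * c, ?_⟩
    rw [hm, hc]
    congr 2
    ext i
    simp only [Pi.mul_apply]
    rw [← mul_assoc, hss, one_mul]
  · intro e he
    rw [hm] at he
    have := hin _ he
    ext i
    have h1 := congrFun this i
    simp only [Pi.mul_apply, Pi.zero_apply] at h1
    have h2 := hss i
    have h3 : e i = s i * (s i * e i) := by rw [← mul_assoc, h2, one_mul]
    rw [h3, h1]; simp

end LU
end Part13

section Part14
namespace LU
set_option linter.unusedSectionVars false

section Final
universe u
variable {F : Type u} [NormedField F] [IsUltrametricDist F] {d : ℕ} {K : Subfield F}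
open LocalUnif

lemma inMax_iff {O : ValuationSubring F} (hO : ∀ x : F, ‖x‖ ≤ 1 ↔ x ∈ O) (x : F) :
    InMax O x ↔ ‖x‖ < 1 := by
  unfold InMax
  rw [← hO, norm_inv]
  by_cases hx : x = 0
  · simp [hx]
  · have : 0 < ‖x‖ := norm_pos_iff.mpr hx
    simp only [hx, false_or, not_le]
    exact one_lt_inv₀ this

lemma isVUnit_iff {O : ValuationSubring F} (hO : ∀ x : F, ‖x‖ ≤ 1 ↔ x ∈ O) (x : F) :
    IsVUnit O x ↔ ‖x‖ = 1 := by
  unfold IsVUnit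
  rw [← hO, ← hO, norm_inv]
  constructor
  · rintro ⟨h0, h1, h2⟩
    have : 0 < ‖x‖ := norm_pos_iff.mpr h0
    exact le_antisymm h1 ((inv_le_one₀ this).mp h2)
  · intro h
    refine ⟨?_, h.le, by simp [h]⟩
    rintro rfl
    simp at h

lemma final_normed (O : ValuationSubring F) (hO : ∀ x : F, ‖x‖ ≤ 1 ↔ x ∈ O)
    (hd : 0 < d)
    (S : Finset F) (hS : IntermediateField.adjoin K (S : Set F) = ⊤)
    (htriv : TrivialOn O K) (hrat : ResidueEq O K)
    (t : Fin d → F) (ht : IsTranscendenceBasis K t)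
    (x0 : Fin d → F) (hx0 : ValIndepMod O K x0) : UnifIn ⊤ K O := by
  classical
  have hK : TrivN K := by
    intro c hc h0
    exact (isVUnit_iff hO c).mp ⟨h0, htriv c hc⟩
  have hR : ResN K := by
    intro y hy
    obtain ⟨c, hc, h⟩ := hrat y ((hO y).mp hy)
    exact ⟨c, hc, (inMax_iff hO _).mp h⟩
  have hind : ∀ e : Fin d → ℤ, ‖mono x0 e‖ = 1 → e = 0 := by
    intro e he
    refine hx0.2 e ⟨1, K.one_mem, one_ne_zero, ?_⟩
    rw [div_one]
    exact (isVUnit_iff hO _).mpr he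
  have hinj : ∀ e f : Fin d → ℤ, ‖mono x0 e‖ = ‖mono x0 f‖ → e = f := by
    intro e f h
    have h0 : ‖mono x0 f‖ ≠ 0 := norm_ne_zero_iff.mpr (mono_ne hx0.1 _)
    have := hind (e - f) (by rw [mono_sub hx0.1, norm_div, h, div_self h0])
    exact sub_eq_zero.mp this
  have b0 := transBasis ht (indep_of_inj hK hx0.1 hinj)
  haveI := finDim b0 S hS
  obtain ⟨M, hM, hy⟩ := pow_norm hK hx0.1 hinj
  obtain ⟨x, hx⟩ := good_of_lattice hx0.1 hind M hM hy
  have b1 := transBasis ht (Good.algebraicIndependent hK hx)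
  haveI := finDim b1 S hS
  intro m ζ hζ
  let g : Fin S.card → F := fun i =>
    if ((S.equivFin.symm i : S) : F) ∈ O then (S.equivFin.symm i : F) else (S.equivFin.symm i : F)⁻¹
  have hg : ∀ i, g i ∈ O := by
    intro i
    simp only [g]
    split_ifs with h
    · exact h
    · exact (O.mem_or_inv_mem _).resolve_left h
  let ζ' : Fin (m + S.card) → F := Fin.append ζ g
  have hζ' : ∀ k, ‖ζ' k‖ ≤ 1 := by
    intro k
    rw [hO]
    refine Fin.addCases (fun i => ?_) (fun i => ?_) k
    · simp only [ζ', Fin.append_left]; exact (hζ i).2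
    · simp only [ζ', Fin.append_right]; exact hg i
  obtain ⟨x', hx', w, hw, f, h1, h2, h3, h4⟩ := assemble hK hR hx hd _ ζ' hζ'
  have b2 := transBasis ht (Good.algebraicIndependent hK hx')
  refine ⟨d, _, x', Fin.append w ζ', ⟨?_, ?_, b2.1, ?_, ?_, f, ?_, h2, h3, ?_⟩,
    fun k => Fin.natAdd _ (Fin.castAdd _ k), ?_⟩
  · exact fun i => ⟨trivial, (hO _).mp (hx'.lt i).le⟩
  · intro i
    refine ⟨trivial, (hO _).mp ?_⟩
    refine Fin.addCases (fun i => ?_) (fun i => ?_) i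
    · rw [Fin.append_left]; exact hw i
    · rw [Fin.append_right]; exact hζ' i
  · intro z _
    exact b2.isAlgebraic_field.isAlgebraic z
  · set C := Subfield.closure ((K : Set F) ∪ Set.range x' ∪ Set.range (Fin.append w ζ')) with hC
    have hKC : (K : Set F) ⊆ C := fun y hy => Subfield.subset_closure (Or.inl (Or.inl hy))
    have hSC : (S : Set F) ⊆ C := by
      intro s hs
      have hm : g (S.equivFin ⟨s, hs⟩) ∈ C := by
        refine Subfield.subset_closure (Or.inr ⟨Fin.natAdd _ (Fin.natAdd _ (S.equivFin ⟨s, hs⟩)), ?_⟩)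
        rw [Fin.append_right]
        exact Fin.append_right _ _ _
      simp only [g, Equiv.symm_apply_apply] at hm
      split_ifs at hm with h
      · exact hm
      · have := C.inv_mem hm
        rwa [inv_inv] at this
    rw [eq_top_iff]
    intro y _
    have hy : y ∈ IntermediateField.adjoin K (S : Set F) := by rw [hS]; trivial
    have hle : (IntermediateField.adjoin K (S : Set F)).toSubfield ≤ C := by
      rw [IntermediateField.adjoin_toSubfield, Subfield.closure_le]
      rintro y (⟨k, rfl⟩ | hy)
      · exact hKC k.2
      · exact hSC hy
    exact hle hy
  · intro i e
    refine Subring.closure_mono ?_ (h1 i e)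
    apply Set.union_subset_union_left
    intro y hy
    exact ⟨hy, (htriv y hy).1⟩
  · exact (isVUnit_iff hO _).mpr h4
  · intro k
    rw [Fin.append_right]
    exact Fin.append_left _ _ _
end Final

section Norm
open LocalUnif

lemma mulArch {F : Type*} [Field F] (O : ValuationSubring F) (h : LocalUnif.RankOne O) :
    MulArchimedean O.ValueGroup := by
  refine ⟨fun x y hy => ?_⟩
  by_cases hx : x ≤ 1
  · exact ⟨0, by simpa using hx⟩
  push Not at hx
  obtain ⟨a, rfl⟩ := O.valuation_surjective x
  obtain ⟨b, rfl⟩ := O.valuation_surjective y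
  have ha : a ≠ 0 := by rintro rfl; simp at hx
  have hb : b ≠ 0 := by rintro rfl; simp at hy
  have ha' : a ∉ O := by rw [← O.valuation_le_one_iff]; exact not_le.mpr hx
  have hb' : b ∉ O := by rw [← O.valuation_le_one_iff]; exact not_le.mpr hy
  obtain ⟨n, hn⟩ := h b⁻¹ a⁻¹ (inv_ne_zero hb) (Or.inr (by rwa [inv_inv])) (inv_ne_zero ha)
    (Or.inr (by rwa [inv_inv]))
  refine ⟨n, ?_⟩
  have hpos : 0 < O.valuation b ^ n := by
    rw [← map_pow]; exact zero_lt_iff.mpr ((map_ne_zero _).mpr (pow_ne_zero _ hb))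
  rw [← O.valuation_le_one_iff, map_div₀, map_pow, map_inv₀, map_inv₀, div_inv_eq_mul, inv_pow,
    inv_mul_le_iff₀ hpos, mul_one] at hn
  exact hn

lemma exists_normed {F : Type*} [inst : Field F] (O : ValuationSubring F)
    (h : LocalUnif.RankOne O) (hne : O ≠ ⊤) :
    ∃ nf : NormedField F, nf.toField = inst ∧ (∀ x y : F, ‖x + y‖ ≤ max ‖x‖ ‖y‖) ∧
      ∀ x : F, ‖x‖ ≤ 1 ↔ x ∈ O := by
  have hnt : O.valuation.IsNontrivial := by
    by_contra hh
    exact hne ((ValuationSubring.eq_top_iff O).mpr hh)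
  haveI := mulArch O h
  have h' : MulArchimedean (MonoidWithZeroHom.ValueGroup₀ (.ofClass O.valuation)) :=
    MulArchimedean.comap MonoidWithZeroHom.ValueGroup₀.embedding.toMonoidHom
      MonoidWithZeroHom.ValueGroup₀.embedding_strictMono
  rw [← O.valuation.nonempty_rankOne_iff_mulArchimedean] at h'
  obtain ⟨hv⟩ := h'
  letI : Valued F O.ValueGroup := Valued.mk' O.valuation
  letI hv' : Valuation.RankOne (Valued.v : Valuation F O.ValueGroup) := hv
  refine ⟨Valued.toNormedField F O.ValueGroup, rfl, fun x y => O.valuation.norm_add_le x y, ?_⟩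
  intro x
  rw [← O.valuation_le_one_iff]
  exact Valued.toNormedField.norm_le_one_iff
end Norm

lemma final {F : Type*} [Field F] (K : Subfield F) (O : ValuationSubring F)
    (hff : LocalUnif.IsFunctionField K) (htriv : LocalUnif.TrivialOn O K)
    (hrat : LocalUnif.ResidueEq O K) (hrk1 : LocalUnif.RankOne O)
    (habh : ∃ d : ℕ, LocalUnif.TrdegEq K d ∧ LocalUnif.RatRankEq O K d) :
    LocalUnif.UnifIn ⊤ K O := by
  obtain ⟨⟨S, hS⟩, z, hz⟩ := hff
  obtain ⟨d, ⟨t, ht⟩, ⟨x0, hx0⟩, -⟩ := habh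
  have hd : 0 < d := by
    rcases Nat.eq_zero_or_pos d with rfl | h
    · exfalso
      have := ht.isEmpty_iff_isAlgebraic.mp inferInstance
      exact hz (this.isAlgebraic z)
    · exact h
  have hne : O ≠ ⊤ := by
    rintro rfl
    have := hx0.2 (Pi.single ⟨0, hd⟩ 1) ⟨1, K.one_mem, one_ne_zero, ?_⟩
    · have := congrFun this ⟨0, hd⟩
      simp at this
    · refine ⟨?_, trivial, trivial⟩
      rw [div_one]
      exact Finset.prod_ne_zero_iff.mpr fun i _ => zpow_ne_zero _ (hx0.1 i)
  obtain ⟨nf, rfl, hu, hO⟩ := exists_normed O hrk1 hne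
  haveI : IsUltrametricDist F :=
    IsUltrametricDist.isUltrametricDist_of_forall_norm_add_le_max_norm hu
  exact final_normed O hO hd S hS htriv hrat t ht x0 hx0
end LU
end Part14

open LocalUnif in
/-- Corollary to Theorem 1.7; Corollary 5.10 of the paper.
If `P` is a rational Abhyankar place of rank 1 of the function field `F|K`
(i.e. `FP = K`, the value group is archimedean ordered, and
`trdeg F|K = dim_ℚ (ℚ ⊗ v_P F)`), then `(F|K, P)` is uniformizable. -/
theorem statement_5
    (F : Type*) [Field F] (K : Subfield F) (O : ValuationSubring F)
    (hff : IsFunctionField K) (htriv : TrivialOn O K)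
    (hrat : ResidueEq O K) (hrk1 : RankOne O)
    (habh : ∃ d : ℕ, TrdegEq K d ∧ RatRankEq O K d) :
    UnifIn ⊤ K O := by
  exact LU.final K O hff htriv hrat hrk1 habh
end
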